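/- arXiv:1509.05485 — 2 statements merged into one kernel-verified Lean document; each statement's English description precedes it below -/
import Mathlib

section
/- Let K ⊂ ℝⁿ be a convex body containing the origin in its interior, and p > 0. Then the L_p affine surface area defined by Ω_p(K) = inf over positive continuous g : ∂K → ℝ of (∫_{∂K} g^{-n} dC₀(K,·))^{p/(n+p)} (∫_{∂K} g^p (h_K∘ν_K)^{1-p} dC_{n-1}(K,·))^{n/(n+p)} equals ∫_{∂K} (H_K(x) / h_K(ν_K(x))^{(p-1)n/p})^{p/(n+p)} dH^{n-1}(x). -/
open MeasureTheory Metric Set Filter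
open scoped RealInnerProductSpace ENNReal NNReal Topology

noncomputable section

abbrev Euc (n : ℕ) := EuclideanSpace ℝ (Fin n)

def IsConvexBody {n : ℕ} (K : Set (Euc n)) : Prop :=
  IsCompact K ∧ Convex ℝ K ∧ (interior K).Nonempty

def IsOuterNormalAt {n : ℕ} (K : Set (Euc n)) (u x : Euc n) : Prop :=
  x ∈ frontier K ∧ ∀ y ∈ K, ⟪y, u⟫ ≤ ⟪x, u⟫

open Classical in
/-- The Gauss map: at a regular boundary point, the unique outer unit normal. -/
def gaussMap {n : ℕ} (K : Set (Euc n)) (x : Euc n) : Euc n :=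
  if h : ∃ u, ‖u‖ = 1 ∧ IsOuterNormalAt K u x then h.choose else 0

open Classical in
/-- The inverse Gauss map: at a regular normal vector, the unique boundary point
with that outer normal. -/
def gaussMapInv {n : ℕ} (K : Set (Euc n)) (u : Euc n) : Euc n :=
  if h : ∃ x, IsOuterNormalAt K u x then h.choose else 0

/-- The (n-1)-th curvature measure: (n-1)-dimensional Hausdorff measure on the boundary. -/
def bdryMeasure (n : ℕ) (K : Set (Euc n)) : Measure (Euc n) :=
  (Measure.hausdorffMeasure ((n : ℝ) - 1)).restrict (frontier K)

/-- The 0-th curvature measure: C₀(K,β) = H^{n-1}(ν(K,β)), realized as the pushforward of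
the spherical Hausdorff measure under the inverse Gauss map. -/
def curv0 (n : ℕ) (K : Set (Euc n)) : Measure (Euc n) :=
  Measure.map (gaussMapInv K)
    ((Measure.hausdorffMeasure ((n : ℝ) - 1)).restrict (Metric.sphere (0 : Euc n) 1))

/-- The generalized Gauss curvature H_K, as density of C₀(K,·) w.r.t. C_{n-1}(K,·). -/
def gaussCurv (n : ℕ) (K : Set (Euc n)) : Euc n → ℝ≥0∞ :=
  Measure.rnDeriv (curv0 n K) (bdryMeasure n K)

/-- The surface area measure S_K, pushforward of boundary Hausdorff measure by the Gauss map. -/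
def surfaceMeasure (n : ℕ) (K : Set (Euc n)) : Measure (Euc n) :=
  Measure.map (gaussMap K) (bdryMeasure n K)

/-- The generalized curvature function F_K, as density of S_K w.r.t. spherical Hausdorff measure. -/
def curvFn (n : ℕ) (K : Set (Euc n)) : Euc n → ℝ≥0∞ :=
  Measure.rnDeriv (surfaceMeasure n K)
    ((Measure.hausdorffMeasure ((n : ℝ) - 1)).restrict (Metric.sphere (0 : Euc n) 1))

/-- The support function of K. -/
def suppFn {n : ℕ} (K : Set (Euc n)) (x : Euc n) : ℝ :=
  sSup ((fun y => ⟪y, x⟫) '' K)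

/-- L_p affine surface area, via curvature measures: the infimum over positive continuous
functions g on the boundary. -/
def lpASA (n : ℕ) (p : ℝ) (K : Set (Euc n)) : ℝ≥0∞ :=
  sInf {v : ℝ≥0∞ | ∃ g : Euc n → ℝ, ContinuousOn g (frontier K) ∧
    (∀ x ∈ frontier K, 0 < g x) ∧
    v = (∫⁻ x, ENNReal.ofReal (g x) ^ (-(n : ℝ)) ∂(curv0 n K)) ^ (p / (n + p)) *
        (∫⁻ x, ENNReal.ofReal (g x) ^ p *
          ENNReal.ofReal (suppFn K (gaussMap K x)) ^ (1 - p) ∂(bdryMeasure n K)) ^ ((n : ℝ) / (n + p))}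

/-!
Write `a = p / (n + p)`, let `μ = h_K ^ (1 - p) dH^{n-1}` on the boundary and `ν = C₀(K, ·)`. With
`f = g ^ (n + p)` the product defining `Ω_p(K)` is `(∫ f ^ (a - 1) dν) ^ a (∫ f ^ a dμ) ^ (1 - a)`,
which is Hölder's upper bound for the Hellinger affinity `∫ (dν/dμ) ^ a dμ`, an expression equal to
the claimed integral by the chain rule for densities. The bound is attained by `f = dν/dμ`, with
`f = ∞` on a `μ`-null set carrying the singular part of `ν`, so truncating this `f` and
approximating it almost everywhere by positive continuous functions shows that the affinity is the
infimum.

The limits need `μ` and `ν` to be finite: the nearest-point map onto a convex body `K` is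
`1`-Lipschitz and maps the boundary of any larger bounded set onto a set containing `∂K`, so `∂K`
has at most the `H^{n-1}`-measure of the boundary of a cube.

The Gauss map is a choice of normals at singular points, so `h_K ∘ ν_K` is not known to be
measurable; its powers are integrated through a measurable minorant defining the same measure.
-/

theorem rpow_le_rpow_of_exponent_nonpos {s t : ℝ≥0∞} (hst : s ≤ t) {b : ℝ} (hb : b ≤ 0) :
    t ^ b ≤ s ^ b := by
  rw [← neg_neg b, ENNReal.rpow_neg, ENNReal.rpow_neg s]
  exact ENNReal.inv_le_inv.2 (ENNReal.rpow_le_rpow hst (neg_nonneg.2 hb))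

theorem exists_rpow_mem_Icc {r R : ℝ≥0∞} (hr : r ≠ 0) (hR : R ≠ ∞) (s : ℝ) :
    ∃ c C : ℝ≥0∞, c ≠ 0 ∧ C ≠ ∞ ∧ ∀ t ∈ Icc r R, t ^ s ∈ Icc c C := by
  rcases le_total 0 s with hs | hs
  · exact ⟨r ^ s, R ^ s, by simp [hr, hs], by simp [hR, hs],
      fun t ht => ⟨ENNReal.rpow_le_rpow ht.1 hs, ENNReal.rpow_le_rpow ht.2 hs⟩⟩
  · exact ⟨R ^ s, r ^ s, by simp [hR, hs], by simp [hr, hs], fun t ht =>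
      ⟨rpow_le_rpow_of_exponent_nonpos ht.2 hs, rpow_le_rpow_of_exponent_nonpos ht.1 hs⟩⟩

section MeasurableMinorant

variable {X : Type*} [MeasurableSpace X] {μ : Measure X} [SigmaFinite μ] {w w' : X → ℝ≥0∞}

theorem ae_le_of_withDensity_eq {φ : X → ℝ≥0∞} (hφ : Measurable φ) (hle : φ ≤ᵐ[μ] w)
    (heq : μ.withDensity w' = μ.withDensity w) : φ ≤ᵐ[μ] w' := by
  refine ae_le_of_forall_setLIntegral_le_of_sigmaFinite hφ fun s hs _ => ?_
  calc ∫⁻ x in s, φ x ∂μ ≤ ∫⁻ x in s, w x ∂μ :=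
        lintegral_mono_ae (ae_restrict_of_ae hle)
    _ = ∫⁻ x in s, w' x ∂μ := by rw [← withDensity_apply _ hs, ← withDensity_apply _ hs, heq]

theorem lintegral_rpow_eq_of_withDensity_eq {ρ : Measure X} (hρ : ρ ≪ μ) (hle : w' ≤ w)
    (heq : μ.withDensity w' = μ.withDensity w) {b : ℝ} (hb : 0 < b) :
    ∫⁻ x, w x ^ b ∂ρ = ∫⁻ x, w' x ^ b ∂ρ := by
  refine le_antisymm ?_ (lintegral_mono fun x => ENNReal.rpow_le_rpow (hle x) hb.le)
  obtain ⟨φ, hφ, hφ_le, hφ_eq⟩ := exists_measurable_le_lintegral_eq ρ fun x => w x ^ b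
  have root_le : (fun x => φ x ^ b⁻¹) ≤ᵐ[μ] w' :=
    ae_le_of_withDensity_eq (hφ.pow_const _)
      (ae_of_all _ fun x => (ENNReal.rpow_inv_le_iff hb).2 (hφ_le x)) heq
  rw [hφ_eq]
  refine lintegral_mono_ae ?_
  filter_upwards [hρ.ae_le root_le] with x hx
  exact (ENNReal.rpow_inv_le_iff hb).1 hx

theorem lintegral_withDensity_eq_lintegral_mul_of_aemeasurable {u : X → ℝ≥0∞}
    (hu : AEMeasurable u μ) (hu_top : ∀ᵐ x ∂μ, u x < ∞) (w : X → ℝ≥0∞) :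
    ∫⁻ x, u x ∂μ.withDensity w = ∫⁻ x, u x * w x ∂μ := by
  obtain ⟨w', hw', hle, heq⟩ := exists_measurable_le_withDensity_eq μ w
  have swap := lintegral_rpow_eq_of_withDensity_eq (withDensity_absolutelyContinuous μ u) hle heq
    one_pos
  simp only [ENNReal.rpow_one] at swap
  calc ∫⁻ x, u x ∂μ.withDensity w
      = ∫⁻ x, u x * w' x ∂μ := by
        rw [← heq, lintegral_withDensity_eq_lintegral_mul₀ hw'.aemeasurable hu]
        simp only [Pi.mul_apply, mul_comm]
    _ = ∫⁻ x, w' x ∂μ.withDensity u :=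
        (lintegral_withDensity_eq_lintegral_mul_non_measurable₀ μ hu hu_top w').symm
    _ = ∫⁻ x, w x ∂μ.withDensity u := swap.symm
    _ = ∫⁻ x, u x * w x ∂μ :=
        lintegral_withDensity_eq_lintegral_mul_non_measurable₀ μ hu hu_top w

end MeasurableMinorant

section HellingerAffinity

/-- The Hellinger affinity `∫ dν ^ a dμ ^ (1 - a)` of order `a`; for `0 < a < 1` only the part of
`ν` that is absolutely continuous with respect to `μ` contributes. -/
def hellingerAffinity {X : Type*} [MeasurableSpace X] (a : ℝ) (μ ν : Measure X) : ℝ≥0∞ :=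
  ∫⁻ x, ν.rnDeriv μ x ^ a ∂μ

/-- The upper bound that Hölder's inequality gives for the Hellinger affinity of order `a` when
`dν ^ a dμ ^ (1 - a)` is written as `(f ^ (a - 1) dν) ^ a (f ^ a dμ) ^ (1 - a)`. -/
def momentProduct {X : Type*} [MeasurableSpace X] (a : ℝ) (μ ν : Measure X) (f : X → ℝ≥0∞) :
    ℝ≥0∞ :=
  (∫⁻ x, f x ^ (a - 1) ∂ν) ^ a * (∫⁻ x, f x ^ a ∂μ) ^ (1 - a)

variable {X : Type*} [MeasurableSpace X] {μ ν : Measure X} {a : ℝ}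

theorem hellingerAffinity_withDensity [SigmaFinite μ] [SigmaFinite ν] {w : X → ℝ≥0∞} {c : ℝ≥0∞}
    (hc : c ≠ 0) (hcw : ∀ᵐ x ∂μ, c ≤ w x) (hw_top : ∀ᵐ x ∂μ, w x ≠ ∞) (ha0 : 0 ≤ a) (ha1 : a < 1) :
    hellingerAffinity a (μ.withDensity w) ν =
      ∫⁻ x, ν.rnDeriv μ x ^ a * w x ^ (1 - a) ∂μ := by
  obtain ⟨w', hw', hle, heq⟩ := exists_measurable_le_withDensity_eq μ w
  set H := ν.rnDeriv μ
  have hH : Measurable fun x => H x ^ a := (Measure.measurable_rnDeriv ν μ).pow_const a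
  have hH_top : ∀ᵐ x ∂μ, H x ^ a < ∞ := by
    filter_upwards [Measure.rnDeriv_lt_top ν μ] with x hx
    exact ENNReal.rpow_lt_top_of_nonneg ha0 hx.ne
  have w'_ne_zero : ∀ᵐ x ∂μ, w' x ≠ 0 := by
    filter_upwards [ae_le_of_withDensity_eq measurable_const hcw heq] with x hx
    exact (hc.bot_lt.trans_le hx).ne'
  have w'_ne_top : ∀ᵐ x ∂μ, w' x ≠ ∞ := hw_top.mono fun x hx => ne_top_of_le_ne_top hx (hle x)
  have integrand_eq : ∀ᵐ x ∂μ,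
      w' x * ν.rnDeriv (μ.withDensity w') x ^ a = H x ^ a * w' x ^ (1 - a) := by
    filter_upwards [Measure.rnDeriv_withDensity_right ν μ hw'.aemeasurable w'_ne_zero w'_ne_top,
      w'_ne_zero, w'_ne_top] with x hx h0 h_top
    rw [hx, ENNReal.mul_rpow_of_nonneg _ _ ha0, ENNReal.inv_rpow, ENNReal.rpow_sub _ _ h0 h_top,
      ENNReal.rpow_one, div_eq_mul_inv]
    ring
  calc hellingerAffinity a (μ.withDensity w) ν
      = ∫⁻ x, w' x * ν.rnDeriv (μ.withDensity w') x ^ a ∂μ := by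
        rw [← heq, hellingerAffinity, lintegral_withDensity_eq_lintegral_mul _ hw'
          ((Measure.measurable_rnDeriv _ _).pow_const a)]
        rfl
    _ = ∫⁻ x, w' x ^ (1 - a) ∂μ.withDensity fun x => H x ^ a := by
        rw [lintegral_congr_ae integrand_eq,
          lintegral_withDensity_eq_lintegral_mul_non_measurable _ hH hH_top]
        rfl
    _ = ∫⁻ x, w x ^ (1 - a) ∂μ.withDensity fun x => H x ^ a :=
        (lintegral_rpow_eq_of_withDensity_eq (withDensity_absolutelyContinuous μ _) hle heq
          (sub_pos.2 ha1)).symm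
    _ = ∫⁻ x, H x ^ a * w x ^ (1 - a) ∂μ :=
        lintegral_withDensity_eq_lintegral_mul_non_measurable _ hH hH_top _

theorem hellingerAffinity_le_momentProduct (ha0 : 0 < a) (ha1 : a < 1) {f : X → ℝ≥0∞}
    (hf : AEMeasurable f μ) (hf0 : ∀ᵐ x ∂μ, f x ≠ 0) (hf_top : ∀ᵐ x ∂μ, f x ≠ ∞) :
    hellingerAffinity a μ ν ≤ momentProduct a μ ν f := by
  set H := ν.rnDeriv μ
  have hH : AEMeasurable H μ := (Measure.measurable_rnDeriv ν μ).aemeasurable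
  have split : ∀ᵐ x ∂μ, H x ^ a = (H x * f x ^ (a - 1)) ^ a * (f x ^ a) ^ (1 - a) := by
    filter_upwards [hf0, hf_top] with x h0 h_top
    rw [ENNReal.mul_rpow_of_nonneg _ _ ha0.le, mul_assoc, ← ENNReal.rpow_mul, ← ENNReal.rpow_mul,
      ← ENNReal.rpow_add _ _ h0 h_top, show (a - 1) * a + a * (1 - a) = 0 by ring,
      ENNReal.rpow_zero, mul_one]
  calc hellingerAffinity a μ ν
      = ∫⁻ x, (H x * f x ^ (a - 1)) ^ a * (f x ^ a) ^ (1 - a) ∂μ := lintegral_congr_ae split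
    _ ≤ (∫⁻ x, H x * f x ^ (a - 1) ∂μ) ^ a * (∫⁻ x, f x ^ a ∂μ) ^ (1 - a) :=
        ENNReal.lintegral_mul_norm_pow_le (hH.mul (hf.pow_const _)) (hf.pow_const _) ha0.le
          (sub_nonneg.2 ha1.le) (add_sub_cancel a 1)
    _ = (∫⁻ x, f x ^ (a - 1) ∂μ.withDensity H) ^ a * (∫⁻ x, f x ^ a ∂μ) ^ (1 - a) := by
        rw [lintegral_withDensity_eq_lintegral_mul₀ hH (hf.pow_const _)]
        rfl
    _ ≤ momentProduct a μ ν f := by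
        unfold momentProduct
        gcongr
        exact Measure.withDensity_rnDeriv_le ν μ

theorem hellingerAffinity_ne_top [IsFiniteMeasure μ] [IsFiniteMeasure ν] (ha0 : 0 < a)
    (ha1 : a < 1) : hellingerAffinity a μ ν ≠ ∞ := by
  have bound : hellingerAffinity a μ ν ≤ ν univ ^ a * μ univ ^ (1 - a) := by
    simpa [momentProduct] using
      hellingerAffinity_le_momentProduct (ν := ν) ha0 ha1 (f := fun _ => 1) aemeasurable_const
        (ae_of_all _ fun _ => one_ne_zero) (ae_of_all _ fun _ => ENNReal.one_ne_top)
  refine ne_top_of_le_ne_top (ENNReal.mul_ne_top ?_ ?_) bound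
  · exact ENNReal.rpow_ne_top_of_nonneg ha0.le (measure_ne_top ν univ)
  · exact ENNReal.rpow_ne_top_of_nonneg (sub_nonneg.2 ha1.le) (measure_ne_top μ univ)

/- The minimizer of `momentProduct` is the density of `ν`, set to `∞` on the part that carries the
singular part of `ν`, where it makes `f ^ (a - 1)` vanish. -/
theorem exists_measurable_lintegral_rpow_eq_hellingerAffinity [SigmaFinite μ] [SigmaFinite ν]
    (ha0 : 0 < a) (ha1 : a < 1) :
    ∃ f : X → ℝ≥0∞, Measurable f ∧ ∫⁻ x, f x ^ (a - 1) ∂ν = hellingerAffinity a μ ν ∧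
      ∫⁻ x, f x ^ a ∂μ = hellingerAffinity a μ ν := by
  classical
  set H := ν.rnDeriv μ
  have hH : Measurable H := Measure.measurable_rnDeriv ν μ
  obtain ⟨S, hS, hνS, hμS⟩ := Measure.mutuallySingular_singularPart ν μ
  let f : X → ℝ≥0∞ := S.piecewise H fun _ => ∞
  have hf : Measurable f := hH.piecewise hS measurable_const
  have f_eq_density : ∀ᵐ x ∂μ, f x = H x := by
    filter_upwards [measure_eq_zero_iff_ae_notMem.1 hμS] with x hx
    exact piecewise_eq_of_mem _ _ _ (not_notMem.1 hx)
  have f_eq_top : ∀ᵐ x ∂ν.singularPart μ, f x = ∞ := by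
    filter_upwards [measure_eq_zero_iff_ae_notMem.1 hνS] with x hx
    exact piecewise_eq_of_notMem _ _ _ hx
  have singular_part : ∫⁻ x, f x ^ (a - 1) ∂ν.singularPart μ = 0 := by
    rw [lintegral_eq_zero_iff (hf.pow_const _)]
    filter_upwards [f_eq_top] with x hx
    simp [hx, ha1]
  have density_part : ∫⁻ x, H x * f x ^ (a - 1) ∂μ = hellingerAffinity a μ ν := by
    refine lintegral_congr_ae ?_
    filter_upwards [f_eq_density, Measure.rnDeriv_ne_top ν μ] with x hx h_top
    rw [hx]
    rcases eq_or_ne (H x) 0 with h0 | h0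
    · simp [H, h0, ha0]
    · rw [mul_comm, ENNReal.rpow_sub _ _ h0 h_top, ENNReal.rpow_one,
        ENNReal.div_mul_cancel h0 h_top]
  have moment_a : ∫⁻ x, f x ^ a ∂μ = hellingerAffinity a μ ν :=
    lintegral_congr_ae (f_eq_density.mono fun x hx => congrArg (· ^ a) hx)
  refine ⟨f, hf, ?_, moment_a⟩
  calc ∫⁻ x, f x ^ (a - 1) ∂ν
      = ∫⁻ x, f x ^ (a - 1) ∂(ν.singularPart μ + μ.withDensity H) := by
        rw [← Measure.haveLebesgueDecomposition_add ν μ]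
    _ = ∫⁻ x, H x * f x ^ (a - 1) ∂μ := by
        rw [lintegral_add_measure, singular_part, zero_add,
          lintegral_withDensity_eq_lintegral_mul _ hH (hf.pow_const _)]
        rfl
    _ = hellingerAffinity a μ ν := density_part

end HellingerAffinity

section VariationalFormula

variable {X : Type*} [MeasurableSpace X] {μ ν : Measure X} {a : ℝ}

theorem tendsto_lintegral_rpow_of_dominated {ρ : Measure X} {F : ℕ → X → ℝ≥0∞}
    {f A : X → ℝ≥0∞} {b : ℝ} (hF : ∀ k, Measurable (F k)) (hA : ∫⁻ x, A x ∂ρ ≠ ∞)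
    (hFA : ∀ k x, F k x ^ b ≤ A x) (hlim : ∀ᵐ x ∂ρ, Tendsto (F · x) atTop (𝓝 (f x))) :
    Tendsto (fun k => ∫⁻ x, F k x ^ b ∂ρ) atTop (𝓝 (∫⁻ x, f x ^ b ∂ρ)) :=
  tendsto_lintegral_of_dominated_convergence A (fun k => (hF k).pow_const b)
    (fun k => ae_of_all _ (hFA k)) hA
    (hlim.mono fun _ hx => ((ENNReal.continuous_rpow_const).tendsto _).comp hx)

theorem tendsto_momentProduct (ha0 : 0 ≤ a) (ha1 : a ≤ 1) {F : ℕ → X → ℝ≥0∞} {f A B : X → ℝ≥0∞}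
    (hF : ∀ k, Measurable (F k)) (hA : ∫⁻ x, A x ∂ν ≠ ∞) (hB : ∫⁻ x, B x ∂μ ≠ ∞)
    (hFA : ∀ k x, F k x ^ (a - 1) ≤ A x) (hFB : ∀ k x, F k x ^ a ≤ B x)
    (hν : ∀ᵐ x ∂ν, Tendsto (F · x) atTop (𝓝 (f x)))
    (hμ : ∀ᵐ x ∂μ, Tendsto (F · x) atTop (𝓝 (f x))) :
    Tendsto (fun k => momentProduct a μ ν (F k)) atTop (𝓝 (momentProduct a μ ν f)) := by
  have lim_ν := tendsto_lintegral_rpow_of_dominated hF hA hFA hν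
  have lim_μ := tendsto_lintegral_rpow_of_dominated hF hB hFB hμ
  have limit_ν_ne_top : ∫⁻ x, f x ^ (a - 1) ∂ν ≠ ∞ :=
    ne_top_of_le_ne_top hA (le_of_tendsto' lim_ν fun k => lintegral_mono (hFA k))
  have limit_μ_ne_top : ∫⁻ x, f x ^ a ∂μ ≠ ∞ :=
    ne_top_of_le_ne_top hB (le_of_tendsto' lim_μ fun k => lintegral_mono (hFB k))
  refine ENNReal.Tendsto.mul
    ((ENNReal.continuous_rpow_const.tendsto _).comp lim_ν) (Or.inr ?_)
    ((ENNReal.continuous_rpow_const.tendsto _).comp lim_μ) (Or.inr ?_)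
  · exact ENNReal.rpow_ne_top_of_nonneg (sub_nonneg.2 ha1) limit_μ_ne_top
  · exact ENNReal.rpow_ne_top_of_nonneg ha0 limit_ν_ne_top

/-- The clamp of `t` to the interval `[(k + 1)⁻¹, k + 1]`, which makes a density bounded above and
away from zero. -/
def truncation (k : ℕ) (t : ℝ≥0∞) : ℝ≥0∞ :=
  max ((k : ℝ≥0∞) + 1)⁻¹ (min (k + 1) t)

theorem measurable_truncation (k : ℕ) : Measurable (truncation k) :=
  measurable_const.max (measurable_const.min measurable_id)

theorem truncation_mem_Icc (k : ℕ) (t : ℝ≥0∞) :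
    truncation k t ∈ Icc ((k : ℝ≥0∞) + 1)⁻¹ (k + 1) := by
  have one_le : (1 : ℝ≥0∞) ≤ k + 1 := le_add_self
  exact ⟨le_max_left _ _,
    max_le ((ENNReal.inv_le_one.2 one_le).trans one_le) (min_le_left _ _)⟩

theorem min_one_le_truncation (k : ℕ) (t : ℝ≥0∞) : min 1 t ≤ truncation k t :=
  (min_le_min_right t le_add_self).trans (le_max_right _ _)

theorem truncation_le_max_one (k : ℕ) (t : ℝ≥0∞) : truncation k t ≤ max 1 t :=
  max_le_max (ENNReal.inv_le_one.2 le_add_self) (min_le_right _ _)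

theorem tendsto_truncation (t : ℝ≥0∞) : Tendsto (truncation · t) atTop (𝓝 t) := by
  have lim_top : Tendsto (fun k : ℕ => (k : ℝ≥0∞) + 1) atTop (𝓝 ∞) := by
    simpa using ENNReal.tendsto_nat_nhds_top.add_const 1
  have lim_zero : Tendsto (fun k : ℕ => ((k : ℝ≥0∞) + 1)⁻¹) atTop (𝓝 0) := by
    simpa using tendsto_inv_iff.2 lim_top
  simpa [truncation] using lim_zero.max (lim_top.min (tendsto_const_nhds (x := t)))

theorem truncation_rpow_le_of_nonneg (k : ℕ) (t : ℝ≥0∞) {b : ℝ} (hb : 0 ≤ b) :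
    truncation k t ^ b ≤ 1 + t ^ b := by
  refine (ENNReal.rpow_le_rpow (truncation_le_max_one k t) hb).trans ?_
  rcases max_choice 1 t with h | h <;> rw [h]
  · rw [ENNReal.one_rpow]
    exact le_self_add
  · exact le_add_self

theorem truncation_rpow_le_of_nonpos (k : ℕ) (t : ℝ≥0∞) {b : ℝ} (hb : b ≤ 0) :
    truncation k t ^ b ≤ 1 + t ^ b := by
  refine (rpow_le_rpow_of_exponent_nonpos (min_one_le_truncation k t) hb).trans ?_
  rcases min_choice 1 t with h | h <;> rw [h]
  · rw [ENNReal.one_rpow]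
    exact le_self_add
  · exact le_add_self

variable [TopologicalSpace X] [TopologicalSpace.PseudoMetrizableSpace X] [BorelSpace X]

theorem exists_seq_continuous_tendsto_ae (ρ : Measure X) [IsFiniteMeasure ρ] {f : X → ℝ}
    (hf : Measurable f) {lo hi : ℝ} (hf_mem : ∀ x, f x ∈ Icc lo hi) (hle : lo ≤ hi) :
    ∃ G : ℕ → X → ℝ, (∀ k, Continuous (G k)) ∧ (∀ k x, G k x ∈ Icc lo hi) ∧
      ∀ᵐ x ∂ρ, Tendsto (G · x) atTop (𝓝 (f x)) := by
  have f_memLp : MemLp f 1 ρ :=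
    .of_bound hf.aestronglyMeasurable (max |lo| |hi|)
      (ae_of_all _ fun x => abs_le_max_abs_abs (hf_mem x).1 (hf_mem x).2)
  obtain ⟨ε, -, hε, ε_lim⟩ := exists_seq_strictAnti_tendsto' (zero_lt_one (α := ℝ≥0∞))
  choose g hg g_memLp using fun k =>
    f_memLp.exists_boundedContinuous_eLpNorm_sub_le ENNReal.one_ne_top (hε k).1.ne'
  have in_measure : TendstoInMeasure ρ (fun k x => g k x) atTop f := by
    refine tendstoInMeasure_of_tendsto_eLpNorm one_ne_zero
      (fun k => (g_memLp k).aestronglyMeasurable) hf.aestronglyMeasurable ?_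
    refine tendsto_of_tendsto_of_tendsto_of_le_of_le tendsto_const_nhds ε_lim
      (fun _ => zero_le) fun k => ?_
    exact (eLpNorm_sub_comm _ _ _ _).trans_le (hg k)
  obtain ⟨ns, -, g_lim⟩ := in_measure.exists_seq_tendsto_ae
  refine ⟨fun k x => projIcc lo hi hle (g (ns k) x),
    fun k => continuous_subtype_val.comp (continuous_projIcc.comp (g (ns k)).continuous),
    fun k x => (projIcc lo hi hle _).2, ?_⟩
  filter_upwards [g_lim] with x hx
  have proj_lim := ((continuous_subtype_val.comp
    (continuous_projIcc (h := hle))).tendsto (f x)).comp hx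
  simpa [Function.comp_def, projIcc_of_mem hle (hf_mem x)] using proj_lim

variable [IsFiniteMeasure μ] [IsFiniteMeasure ν] {m : ℝ≥0∞}

theorem le_momentProduct_of_mem_Icc (ha0 : 0 ≤ a) (ha1 : a ≤ 1)
    (hm : ∀ g : X → ℝ, Continuous g → (∀ x, 0 < g x) →
      m ≤ momentProduct a μ ν fun x => ENNReal.ofReal (g x))
    {f : X → ℝ≥0∞} (hf : Measurable f) {lo hi : ℝ≥0∞} (hlo : lo ≠ 0) (hhi : hi ≠ ∞)
    (hle : lo ≤ hi) (hf_mem : ∀ x, f x ∈ Icc lo hi) : m ≤ momentProduct a μ ν f := by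
  have hf_top : ∀ x, f x ≠ ∞ := fun x => ne_top_of_le_ne_top hhi (hf_mem x).2
  have hlo_top : lo ≠ ∞ := ne_top_of_le_ne_top hhi hle
  obtain ⟨G, G_cont, G_mem, G_lim⟩ := exists_seq_continuous_tendsto_ae (μ + ν) hf.ennreal_toReal
    (fun x => ⟨ENNReal.toReal_mono (hf_top x) (hf_mem x).1,
      ENNReal.toReal_mono hhi (hf_mem x).2⟩) (ENNReal.toReal_mono hhi hle)
  have ofReal_G_mem : ∀ k x, ENNReal.ofReal (G k x) ∈ Icc lo hi := fun k x =>
    ⟨(ENNReal.ofReal_toReal hlo_top).ge.trans (ENNReal.ofReal_le_ofReal (G_mem k x).1),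
      (ENNReal.ofReal_le_ofReal (G_mem k x).2).trans (ENNReal.ofReal_toReal hhi).le⟩
  have ofReal_G_lim : ∀ᵐ x ∂(μ + ν),
      Tendsto (fun k => ENNReal.ofReal (G k x)) atTop (𝓝 (f x)) := by
    filter_upwards [G_lim] with x hx
    simpa only [ENNReal.ofReal_toReal (hf_top x)] using ENNReal.tendsto_ofReal hx
  obtain ⟨lim_μ, lim_ν⟩ := ae_add_measure_iff.1 ofReal_G_lim
  have lim := tendsto_momentProduct ha0 ha1 (fun k => (G_cont k).measurable.ennreal_ofReal)
    (A := fun _ => lo ^ (a - 1)) (B := fun _ => hi ^ a)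
    (by simp [lintegral_const, ENNReal.mul_eq_top, ENNReal.rpow_eq_top_iff, hlo, hlo_top])
    (by simp [lintegral_const, ENNReal.mul_eq_top, ENNReal.rpow_eq_top_iff, hhi, ha0.not_gt])
    (fun k x => rpow_le_rpow_of_exponent_nonpos (ofReal_G_mem k x).1 (sub_nonpos.2 ha1))
    (fun k x => ENNReal.rpow_le_rpow (ofReal_G_mem k x).2 ha0) lim_ν lim_μ
  have lo_pos : 0 < lo.toReal := ENNReal.toReal_pos hlo hlo_top
  exact ge_of_tendsto' lim fun k => hm _ (G_cont k) fun x => lo_pos.trans_le (G_mem k x).1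

theorem le_momentProduct_of_lintegral_ne_top (ha0 : 0 ≤ a) (ha1 : a ≤ 1)
    (hm : ∀ g : X → ℝ, Continuous g → (∀ x, 0 < g x) →
      m ≤ momentProduct a μ ν fun x => ENNReal.ofReal (g x))
    {f : X → ℝ≥0∞} (hf : Measurable f) (hfν : ∫⁻ x, f x ^ (a - 1) ∂ν ≠ ∞)
    (hfμ : ∫⁻ x, f x ^ a ∂μ ≠ ∞) : m ≤ momentProduct a μ ν f := by
  have lim : Tendsto (fun k => momentProduct a μ ν fun x => truncation k (f x)) atTop
      (𝓝 (momentProduct a μ ν f)) :=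
    tendsto_momentProduct ha0 ha1 (fun k => (measurable_truncation k).comp hf)
      (A := fun x => 1 + f x ^ (a - 1)) (B := fun x => 1 + f x ^ a)
      (by simp [lintegral_add_left, hfν]) (by simp [lintegral_add_left, hfμ])
      (fun k x => truncation_rpow_le_of_nonpos k _ (sub_nonpos.2 ha1))
      (fun k x => truncation_rpow_le_of_nonneg k _ ha0)
      (ae_of_all _ fun x => tendsto_truncation _) (ae_of_all _ fun x => tendsto_truncation _)
  refine ge_of_tendsto' lim fun k => ?_
  have k_add_one_ne_top : (k : ℝ≥0∞) + 1 ≠ ∞ := by simp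
  have hmem := fun x => truncation_mem_Icc k (f x)
  exact le_momentProduct_of_mem_Icc ha0 ha1 hm ((measurable_truncation k).comp hf)
    (ENNReal.inv_ne_zero.2 k_add_one_ne_top) k_add_one_ne_top
    ((truncation_mem_Icc k 0).1.trans (truncation_mem_Icc k 0).2) hmem

theorem le_hellingerAffinity_of_forall_continuous (ha0 : 0 < a) (ha1 : a < 1)
    (hm : ∀ g : X → ℝ, Continuous g → (∀ x, 0 < g x) →
      m ≤ momentProduct a μ ν fun x => ENNReal.ofReal (g x)) :
    m ≤ hellingerAffinity a μ ν := by
  obtain ⟨f, hf, hfν, hfμ⟩ :=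
    exists_measurable_lintegral_rpow_eq_hellingerAffinity (μ := μ) (ν := ν) ha0 ha1
  have h_top : hellingerAffinity a μ ν ≠ ∞ := hellingerAffinity_ne_top ha0 ha1
  calc m ≤ momentProduct a μ ν f :=
        le_momentProduct_of_lintegral_ne_top ha0.le ha1.le hm hf (hfν ▸ h_top) (hfμ ▸ h_top)
    _ = hellingerAffinity a μ ν := by
        rw [momentProduct, hfν, hfμ, ← ENNReal.rpow_add_of_nonneg _ _ ha0.le (sub_nonneg.2 ha1.le),
          add_sub_cancel, ENNReal.rpow_one]

end VariationalFormula

section ConvexGeometry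

variable {E : Type*} [NormedAddCommGroup E] [InnerProductSpace ℝ E]

theorem dist_le_dist_of_inner_nonpos {x y p q : E} (hp : ⟪x - p, q - p⟫ ≤ 0)
    (hq : ⟪y - q, p - q⟫ ≤ 0) : dist p q ≤ dist x y := by
  have expand : ⟪x - y, p - q⟫ = ‖p - q‖ * ‖p - q‖ - ⟪x - p, q - p⟫ - ⟪y - q, p - q⟫ := by
    have regroup : x - y = (p - q) + (x - p) - (y - q) := by abel
    rw [regroup, inner_sub_left, inner_add_left, real_inner_self_eq_norm_mul_norm, ← neg_sub q p,
      inner_neg_right (x - p)]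
    ring
  have cauchy_schwarz : ‖p - q‖ * ‖p - q‖ ≤ ‖x - y‖ * ‖p - q‖ := by
    linarith [real_inner_le_norm (x - y) (p - q)]
  rw [dist_eq_norm, dist_eq_norm]
  rcases (norm_nonneg (p - q)).eq_or_lt' with h | h
  · rw [h]
    exact norm_nonneg _
  · exact le_of_mul_le_mul_right cauchy_schwarz h

theorem exists_lipschitzWith_one_nearestPoint {K : Set E} (hne : K.Nonempty)
    (hcomplete : IsComplete K) (hconvex : Convex ℝ K) :
    ∃ π : E → E, LipschitzWith 1 π ∧ ∀ x, π x ∈ K ∧ ∀ w ∈ K, ⟪x - π x, w - π x⟫ ≤ 0 := by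
  choose π π_mem π_nearest using exists_norm_eq_iInf_of_complete_convex hne hcomplete hconvex
  have π_inner : ∀ x, ∀ w ∈ K, ⟪x - π x, w - π x⟫ ≤ 0 := fun x =>
    (norm_eq_iInf_iff_real_inner_le_zero hconvex (π_mem x)).1 (π_nearest x)
  exact ⟨π, LipschitzWith.of_dist_le_mul fun x y => by
    simpa using dist_le_dist_of_inner_nonpos (π_inner x _ (π_mem y)) (π_inner y _ (π_mem x)),
    fun x => ⟨π_mem x, π_inner x⟩⟩

theorem exists_unit_outer_normal [CompleteSpace E] {K : Set E} (hK : Convex ℝ K)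
    (hne : (interior K).Nonempty) {x : E} (hx : x ∉ interior K) :
    ∃ u : E, ‖u‖ = 1 ∧ ∀ y ∈ K, ⟪y, u⟫ ≤ ⟪x, u⟫ := by
  obtain ⟨f, f_ne_zero, hf⟩ := geometric_hahn_banach_of_nonempty_interior_point hK hx hne
  set v := (InnerProductSpace.toDual ℝ E).symm f
  have inner_v : ∀ y, ⟪y, v⟫ = f y := fun y => by
    rw [real_inner_comm, InnerProductSpace.toDual_symm_apply]
  have v_ne_zero : v ≠ 0 := (LinearIsometryEquiv.map_eq_zero_iff _).not.2 f_ne_zero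
  refine ⟨‖v‖⁻¹ • v, norm_smul_inv_norm (𝕜 := ℝ) v_ne_zero, fun y hy => ?_⟩
  rw [real_inner_smul_right, real_inner_smul_right, inner_v, inner_v]
  exact mul_le_mul_of_nonneg_left (hf y hy) (by positivity)

theorem exists_add_smul_mem_frontier {L : Set E} (hL : Bornology.IsBounded L) {x u : E}
    (hx : x ∈ L) (hu : u ≠ 0) : ∃ t : ℝ≥0, x + t • u ∈ frontier L := by
  have ray_cont : Continuous fun t : ℝ≥0 => x + t • u := by fun_prop
  have ray_leaves : (fun t : ℝ≥0 => x + t • u) ⁻¹' L ≠ univ := by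
    intro h
    obtain ⟨R, hR⟩ := hL.exists_norm_le
    have t_le : ∀ t : ℝ≥0, t * ‖u‖ ≤ R + ‖x‖ := fun t => by
      have point_mem : x + t • u ∈ L := eq_univ_iff_forall.1 h t
      calc t * ‖u‖ = ‖(x + t • u) - x‖ := by simp [NNReal.smul_def, norm_smul]
        _ ≤ R + ‖x‖ := (norm_sub_le _ _).trans (by gcongr; exact hR _ point_mem)
    have u_pos : 0 < ‖u‖ := norm_pos_iff.2 hu
    obtain ⟨k, hk⟩ := exists_nat_gt ((R + ‖x‖) / ‖u‖)
    exact (t_le k).not_gt (by simpa using (div_lt_iff₀ u_pos).1 hk)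
  obtain ⟨t, ht⟩ := nonempty_frontier_iff.2 ⟨⟨0, by simpa using hx⟩, ray_leaves⟩
  exact ⟨t, ray_cont.frontier_preimage_subset L ht⟩

/- Moving from a boundary point of `K` along an outer normal, the nearest point of `K` does not
change, and `frontier L` is hit eventually. -/
theorem exists_lipschitzWith_one_frontier_subset_image [CompleteSpace E] {K L : Set E}
    (hconvex : Convex ℝ K) (hclosed : IsClosed K) (hne : (interior K).Nonempty) (hKL : K ⊆ L)
    (hL : Bornology.IsBounded L) :
    ∃ π : E → E, LipschitzWith 1 π ∧ frontier K ⊆ π '' frontier L := by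
  obtain ⟨π, π_lipschitz, π_spec⟩ :=
    exists_lipschitzWith_one_nearestPoint (hne.mono interior_subset) hclosed.isComplete hconvex
  refine ⟨π, π_lipschitz, fun x hx => ?_⟩
  have hxK : x ∈ K := hclosed.frontier_subset hx
  obtain ⟨u, hu_norm, hu⟩ := exists_unit_outer_normal hconvex hne hx.2
  obtain ⟨t, ht⟩ := exists_add_smul_mem_frontier hL (hKL hxK)
    (norm_ne_zero_iff.1 (hu_norm ▸ one_ne_zero))
  have x_nearest : ⟪x + t • u - x, π (x + t • u) - x⟫ ≤ 0 := by
    rw [add_sub_cancel_left, NNReal.smul_def, real_inner_smul_left, inner_sub_right,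
      real_inner_comm, real_inner_comm x u]
    exact mul_nonpos_of_nonneg_of_nonpos t.2 (sub_nonpos.2 (hu _ (π_spec _).1))
  refine ⟨x + t • u, ht, dist_le_zero.1 ?_⟩
  exact (dist_le_dist_of_inner_nonpos ((π_spec _).2 x hxK) x_nearest).trans_eq (dist_self _)

theorem hausdorffMeasure_frontier_mono_of_convex [CompleteSpace E] [MeasurableSpace E]
    [BorelSpace E] {d : ℝ} (hd : 0 ≤ d) {K L : Set E} (hconvex : Convex ℝ K) (hclosed : IsClosed K)
    (hne : (interior K).Nonempty) (hKL : K ⊆ L) (hL : Bornology.IsBounded L) :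
    μH[d] (frontier K) ≤ μH[d] (frontier L) := by
  obtain ⟨π, π_lipschitz, hsub⟩ :=
    exists_lipschitzWith_one_frontier_subset_image hconvex hclosed hne hKL hL
  calc μH[d] (frontier K) ≤ μH[d] (π '' frontier L) := measure_mono hsub
    _ ≤ μH[d] (frontier L) := by simpa using π_lipschitz.hausdorffMeasure_image_le hd (frontier L)

theorem exists_abs_inner_eq_of_mem_frontier {ι : Type*} [Finite ι] {b : ι → E} {R : ℝ} {z : E}
    (hz : z ∈ frontier {z | ∀ i, |⟪b i, z⟫| ≤ R}) : ∃ i, |⟪b i, z⟫| = R := by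
  have slab_closed : IsClosed {z | ∀ i, |⟪b i, z⟫| ≤ R} := by
    simp only [ofPred_forall]
    exact isClosed_iInter fun i => isClosed_le (by fun_prop) continuous_const
  have open_slab : IsOpen {z | ∀ i, |⟪b i, z⟫| < R} := by
    simp only [ofPred_forall]
    exact isOpen_iInter_of_finite fun i => isOpen_lt (by fun_prop) continuous_const
  by_contra! h
  exact hz.2 (interior_maximal (fun y hy i => (hy i).le) open_slab
    fun i => (slab_closed.frontier_subset hz i).lt_of_ne (h i))

theorem isBounded_setOf_abs_inner_le {ι : Type*} [Fintype ι] (b : OrthonormalBasis ι ℝ E) (R : ℝ) :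
    Bornology.IsBounded {z | ∀ i, |⟪b i, z⟫| ≤ R} := by
  refine isBounded_iff_forall_norm_le.2 ⟨∑ _i : ι, R, fun z hz => ?_⟩
  calc ‖z‖ = ‖∑ i, ⟪b i, z⟫ • b i‖ := by rw [b.sum_repr' z]
    _ ≤ ∑ i, ‖⟪b i, z⟫ • b i‖ := norm_sum_le _ _
    _ ≤ ∑ _i : ι, R := Finset.sum_le_sum fun i _ => by simpa [norm_smul] using hz i

end ConvexGeometry

section FrontierMeasure

variable {E : Type*} [NormedAddCommGroup E] [InnerProductSpace ℝ E] [MeasurableSpace E]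
  [BorelSpace E] {d : ℕ} [Fact (Module.finrank ℝ E = d + 1)]

theorem hausdorffMeasure_lt_top_of_subset_hyperplane {s : Set E} (hs : Bornology.IsBounded s)
    {v : E} (hv : v ≠ 0) {c : ℝ} (hsub : ∀ z ∈ s, ⟪v, z⟫ = c) : μH[d] s < ∞ := by
  have : FiniteDimensional ℝ E := .of_fact_finrank_eq_succ d
  rcases s.eq_empty_or_nonempty with rfl | ⟨z₀, hz₀⟩
  · simp
  let shift : (ℝ ∙ v)ᗮ → E := fun w => (w : E) + z₀
  have shift_isometry : Isometry shift := (isometry_add_right z₀).comp isometry_subtype_coe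
  have range_shift : s ⊆ range shift := fun z hz =>
    ⟨⟨z - z₀, Submodule.mem_orthogonal_singleton_iff_inner_right.2 (by
      rw [inner_sub_right, hsub z hz, hsub z₀ hz₀, sub_self])⟩, sub_add_cancel z z₀⟩
  have preimage_bounded : Bornology.IsBounded (shift ⁻¹' s) :=
    shift_isometry.antilipschitz.isBounded_preimage hs
  calc μH[d] s = μH[d] (shift '' (shift ⁻¹' s)) := by
        rw [image_preimage_eq_of_subset range_shift]
    _ = μH[Module.finrank ℝ (ℝ ∙ v)ᗮ] (shift ⁻¹' s) := by
        rw [shift_isometry.hausdorffMeasure_image (Or.inl d.cast_nonneg),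
          Submodule.finrank_orthogonal_span_singleton (n := d) hv]
    _ < ∞ := preimage_bounded.measure_lt_top

theorem hausdorffMeasure_frontier_setOf_abs_inner_le_lt_top {ι : Type*} [Fintype ι]
    (b : OrthonormalBasis ι ℝ E) (R : ℝ) :
    μH[d] (frontier {z | ∀ i, |⟪b i, z⟫| ≤ R}) < ∞ := by
  set Q := {z | ∀ i, |⟪b i, z⟫| ≤ R}
  have face_lt_top : ∀ i c, μH[d] (frontier Q ∩ {z | ⟪b i, z⟫ = c}) < ∞ := fun i c =>
    hausdorffMeasure_lt_top_of_subset_hyperplane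
      ((isBounded_setOf_abs_inner_le b R).closure.subset
        (inter_subset_left.trans frontier_subset_closure))
      (b.orthonormal.ne_zero i) fun z hz => hz.2
  have frontier_subset : frontier Q ⊆ ⋃ i,
      (frontier Q ∩ {z | ⟪b i, z⟫ = R}) ∪ (frontier Q ∩ {z | ⟪b i, z⟫ = -R}) := fun z hz => by
    obtain ⟨i, hi⟩ := exists_abs_inner_eq_of_mem_frontier hz
    exact mem_iUnion.2 ⟨i, (eq_or_eq_neg_of_abs_eq hi).imp (⟨hz, ·⟩) (⟨hz, ·⟩)⟩
  refine (measure_mono frontier_subset).trans_lt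
    ((measure_iUnion_fintype_le _ _).trans_lt (ENNReal.sum_lt_top.2 fun i _ => ?_))
  exact measure_union_lt_top (face_lt_top i R) (face_lt_top i (-R))

theorem hausdorffMeasure_frontier_lt_top_of_convex {K : Set E} (hconvex : Convex ℝ K)
    (hclosed : IsClosed K) (hbounded : Bornology.IsBounded K) (hne : (interior K).Nonempty) :
    μH[d] (frontier K) < ∞ := by
  have : FiniteDimensional ℝ E := .of_fact_finrank_eq_succ d
  let b := stdOrthonormalBasis ℝ E
  obtain ⟨R, hR⟩ := hbounded.exists_norm_le
  have subset_cube : K ⊆ {z | ∀ i, |⟪b i, z⟫| ≤ R} := fun z hz i =>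
    calc |⟪b i, z⟫| ≤ ‖b i‖ * ‖z‖ := abs_real_inner_le_norm _ _
      _ ≤ R := by simpa using hR z hz
  exact (hausdorffMeasure_frontier_mono_of_convex d.cast_nonneg hconvex hclosed hne subset_cube
    (isBounded_setOf_abs_inner_le b R)).trans_lt
    (hausdorffMeasure_frontier_setOf_abs_inner_le_lt_top b R)

end FrontierMeasure

section ConvexBody

variable {n : ℕ} {K : Set (Euc n)}

theorem norm_gaussMap (hconvex : Convex ℝ K) (hne : (interior K).Nonempty) {x : Euc n}
    (hx : x ∈ frontier K) : ‖gaussMap K x‖ = 1 := by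
  obtain ⟨u, hu_norm, hu⟩ := exists_unit_outer_normal hconvex hne hx.2
  have hex : ∃ u, ‖u‖ = 1 ∧ IsOuterNormalAt K u x := ⟨u, hu_norm, hx, hu⟩
  rw [gaussMap, dif_pos hex]
  exact hex.choose_spec.1

theorem suppFn_mem_Icc {r R : ℝ} (hr : 0 ≤ r) (hrK : closedBall 0 r ⊆ K)
    (hKR : K ⊆ closedBall 0 R) {u : Euc n} (hu : ‖u‖ = 1) : suppFn K u ∈ Icc r R := by
  have inner_le : ∀ t ∈ (fun y => ⟪y, u⟫) '' K, t ≤ R := by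
    rintro _ ⟨y, hy, rfl⟩
    calc ⟪y, u⟫ ≤ ‖y‖ * ‖u‖ := real_inner_le_norm y u
      _ ≤ R := by simpa [hu] using hKR hy
  have inner_attained : r ∈ (fun y => ⟪y, u⟫) '' K := by
    refine ⟨r • u, hrK ?_, ?_⟩
    · simp [norm_smul, hu, abs_of_nonneg hr]
    · simp [real_inner_smul_left, hu]
  exact ⟨le_csSup ⟨R, inner_le⟩ inner_attained, csSup_le ⟨r, inner_attained⟩ inner_le⟩

theorem exists_suppFn_gaussMap_mem_Icc (hK : IsConvexBody K) (h0 : (0 : Euc n) ∈ interior K) :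
    ∃ r R : ℝ, 0 < r ∧ ∀ x ∈ frontier K, suppFn K (gaussMap K x) ∈ Icc r R := by
  obtain ⟨r, hr, hrK⟩ := nhds_basis_closedBall.mem_iff.1 (mem_interior_iff_mem_nhds.1 h0)
  obtain ⟨R, hKR⟩ := hK.1.isBounded.subset_closedBall 0
  exact ⟨r, R, hr, fun x hx => suppFn_mem_Icc hr.le hrK hKR (norm_gaussMap hK.2.1 hK.2.2 hx)⟩

theorem exists_suppFn_gaussMap_rpow_mem_Icc (hK : IsConvexBody K) (h0 : (0 : Euc n) ∈ interior K)
    (s : ℝ) : ∃ c C : ℝ≥0∞, c ≠ 0 ∧ C ≠ ∞ ∧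
      ∀ᵐ x ∂bdryMeasure n K, ENNReal.ofReal (suppFn K (gaussMap K x)) ^ s ∈ Icc c C := by
  obtain ⟨r, R, hr, h_mem⟩ := exists_suppFn_gaussMap_mem_Icc hK h0
  obtain ⟨c, C, hc, hC, hcC⟩ := exists_rpow_mem_Icc (r := ENNReal.ofReal r)
    (ENNReal.ofReal_pos.2 hr).ne' (ENNReal.ofReal_ne_top (r := R)) s
  refine ⟨c, C, hc, hC, ?_⟩
  filter_upwards [ae_restrict_mem isClosed_frontier.measurableSet] with x hx
  exact hcC _ ⟨ENNReal.ofReal_le_ofReal (h_mem x hx).1, ENNReal.ofReal_le_ofReal (h_mem x hx).2⟩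

theorem isFiniteMeasure_bdryMeasure (hn : 0 < n) (hK : IsConvexBody K) :
    IsFiniteMeasure (bdryMeasure n K) := by
  obtain ⟨m, rfl⟩ := Nat.exists_eq_add_one.2 hn
  have : Fact (Module.finrank ℝ (Euc (m + 1)) = m + 1) := ⟨finrank_euclideanSpace_fin⟩
  refine ⟨?_⟩
  rw [bdryMeasure, Measure.restrict_apply_univ, Nat.cast_succ, add_sub_cancel_right]
  exact hausdorffMeasure_frontier_lt_top_of_convex hK.2.1 hK.1.isClosed hK.1.isBounded hK.2.2

theorem isConvexBody_closedBall (x : Euc n) {r : ℝ} (hr : 0 < r) : IsConvexBody (closedBall x r) :=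
  ⟨isCompact_closedBall x r, convex_closedBall x r,
    (nonempty_ball.2 hr).mono ball_subset_interior_closedBall⟩

theorem isFiniteMeasure_curv0 (hn : 0 < n) (K : Set (Euc n)) : IsFiniteMeasure (curv0 n K) := by
  have := isFiniteMeasure_bdryMeasure hn (isConvexBody_closedBall 0 one_pos)
  rw [bdryMeasure, frontier_closedBall _ one_ne_zero] at this
  unfold curv0
  infer_instance

end ConvexBody

section LpAffineSurfaceArea

/-- The `L_p` surface area measure `h_K ^ (1 - p) dS_K`, kept on the boundary of `K` instead of
being pushed forward to the sphere by the Gauss map. -/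
def lpBdryMeasure (n : ℕ) (p : ℝ) (K : Set (Euc n)) : Measure (Euc n) :=
  (bdryMeasure n K).withDensity fun x => ENNReal.ofReal (suppFn K (gaussMap K x)) ^ (1 - p)

variable {n : ℕ} {p : ℝ} {K : Set (Euc n)}

theorem isFiniteMeasure_lpBdryMeasure [IsFiniteMeasure (bdryMeasure n K)] (hK : IsConvexBody K)
    (h0 : (0 : Euc n) ∈ interior K) : IsFiniteMeasure (lpBdryMeasure n p K) := by
  obtain ⟨c, C, -, hC, h_mem⟩ := exists_suppFn_gaussMap_rpow_mem_Icc hK h0 (1 - p)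
  refine isFiniteMeasure_withDensity (ne_top_of_le_ne_top ?_
    (lintegral_mono_ae (h_mem.mono fun x hx => hx.2)))
  simp [lintegral_const, ENNReal.mul_eq_top, hC]

theorem lintegral_mul_lintegral_eq_momentProduct [SigmaFinite (bdryMeasure n K)]
    (hp : 0 < p) {g : Euc n → ℝ} (hg : AEMeasurable g (bdryMeasure n K)) :
    (∫⁻ x, ENNReal.ofReal (g x) ^ (-(n : ℝ)) ∂(curv0 n K)) ^ (p / (n + p)) *
        (∫⁻ x, ENNReal.ofReal (g x) ^ p *
          ENNReal.ofReal (suppFn K (gaussMap K x)) ^ (1 - p) ∂(bdryMeasure n K)) ^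
            ((n : ℝ) / (n + p)) =
      momentProduct (p / (n + p)) (lpBdryMeasure n p K) (curv0 n K)
        fun x => ENNReal.ofReal (g x) ^ (n + p) := by
  have np_ne_zero : (n : ℝ) + p ≠ 0 := by positivity
  have exponent_curv : ((n : ℝ) + p) * (p / (n + p) - 1) = -n := by field_simp; ring
  have exponent_bdry : ((n : ℝ) + p) * (p / (n + p)) = p := by field_simp
  have conjugate : 1 - p / (n + p) = (n : ℝ) / (n + p) := by field_simp; ring
  simp only [momentProduct, ← ENNReal.rpow_mul, exponent_curv, exponent_bdry, conjugate]
  rw [lpBdryMeasure, lintegral_withDensity_eq_lintegral_mul_of_aemeasurable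
    (hg.ennreal_ofReal.pow_const p)
    (ae_of_all _ fun x => ENNReal.rpow_lt_top_of_nonneg hp.le ENNReal.ofReal_ne_top)]

theorem hellingerAffinity_le_lpASA [SigmaFinite (bdryMeasure n K)] (hn : 0 < n) (hp : 0 < p) :
    hellingerAffinity (p / (n + p)) (lpBdryMeasure n p K) (curv0 n K) ≤ lpASA n p K := by
  refine le_sInf ?_
  rintro _ ⟨g, g_cont, g_pos, rfl⟩
  have frontier_measurable : MeasurableSet (frontier K) := isClosed_frontier.measurableSet
  have g_aemeasurable : AEMeasurable g (bdryMeasure n K) :=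
    g_cont.aemeasurable frontier_measurable
  have lp_ac : lpBdryMeasure n p K ≪ bdryMeasure n K := withDensity_absolutelyContinuous _ _
  have g_pos_ae : ∀ᵐ x ∂lpBdryMeasure n p K, 0 < g x :=
    lp_ac.ae_le ((ae_restrict_mem frontier_measurable).mono g_pos)
  rw [lintegral_mul_lintegral_eq_momentProduct hp g_aemeasurable]
  refine hellingerAffinity_le_momentProduct (by positivity) ?_
    ((g_aemeasurable.mono_ac lp_ac).ennreal_ofReal.pow_const _) ?_ ?_
  · exact (div_lt_one (by positivity)).2 (by simpa using hn)
  · filter_upwards [g_pos_ae] with x hx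
    exact (ENNReal.rpow_pos (ENNReal.ofReal_pos.2 hx) ENNReal.ofReal_ne_top).ne'
  · exact ae_of_all _ fun x => ENNReal.rpow_ne_top_of_nonneg (by positivity) ENNReal.ofReal_ne_top

theorem lpASA_le_hellingerAffinity [SigmaFinite (bdryMeasure n K)]
    [IsFiniteMeasure (lpBdryMeasure n p K)] [IsFiniteMeasure (curv0 n K)] (hn : 0 < n)
    (hp : 0 < p) :
    lpASA n p K ≤ hellingerAffinity (p / (n + p)) (lpBdryMeasure n p K) (curv0 n K) := by
  have np_pos : 0 < (n : ℝ) + p := by positivity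
  refine le_hellingerAffinity_of_forall_continuous (by positivity)
    ((div_lt_one np_pos).2 (by simpa using hn)) fun f f_cont f_pos => ?_
  set g : Euc n → ℝ := fun x => f x ^ ((n : ℝ) + p)⁻¹
  have g_cont : Continuous g := f_cont.rpow_const fun x => Or.inl (f_pos x).ne'
  have g_pos : ∀ x, 0 < g x := fun x => Real.rpow_pos_of_pos (f_pos x) _
  have g_rpow : ∀ x, ENNReal.ofReal (g x) ^ (n + p) = ENNReal.ofReal (f x) := fun x => by
    rw [ENNReal.ofReal_rpow_of_pos (g_pos x), Real.rpow_inv_rpow (f_pos x).le np_pos.ne']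
  refine sInf_le ⟨g, g_cont.continuousOn, fun x _ => g_pos x, ?_⟩
  simp only [lintegral_mul_lintegral_eq_momentProduct hp g_cont.aemeasurable, g_rpow]

theorem hellingerAffinity_lpBdryMeasure [SigmaFinite (bdryMeasure n K)] [SigmaFinite (curv0 n K)]
    (hn : 0 < n) (hp : 0 < p) (hK : IsConvexBody K) (h0 : (0 : Euc n) ∈ interior K) :
    hellingerAffinity (p / (n + p)) (lpBdryMeasure n p K) (curv0 n K) =
      ∫⁻ x, (gaussCurv n K x /
          ENNReal.ofReal (suppFn K (gaussMap K x)) ^ ((p - 1) * n / p)) ^ (p / (n + p))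
        ∂(bdryMeasure n K) := by
  have order_nonneg : 0 ≤ p / (n + p) := by positivity
  have order_lt_one : p / (n + p) < 1 := (div_lt_one (by positivity)).2 (by simpa using hn)
  have exponent_eq :
      (1 - p) * (1 - p / (n + p)) = -((p - 1) * n / p * (p / (n + p))) := by
    field_simp
    ring
  obtain ⟨c, C, hc, hC, h_mem⟩ := exists_suppFn_gaussMap_rpow_mem_Icc hK h0 (1 - p)
  rw [lpBdryMeasure, hellingerAffinity_withDensity hc (h_mem.mono fun x hx => hx.1)
    (h_mem.mono fun x hx => ne_top_of_le_ne_top hC hx.2) order_nonneg order_lt_one]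
  refine lintegral_congr fun x => ?_
  rw [ENNReal.div_rpow_of_nonneg _ _ order_nonneg, div_eq_mul_inv (gaussCurv n K x ^ _),
    ← ENNReal.rpow_neg, ← ENNReal.rpow_mul, ← ENNReal.rpow_mul, exponent_eq, mul_neg]
  rfl

end LpAffineSurfaceArea

theorem statement8 (n : ℕ) (hn : 0 < n) (p : ℝ) (hp : 0 < p) (K : Set (Euc n))
    (hK : IsConvexBody K) (h0 : (0 : Euc n) ∈ interior K) :
    lpASA n p K =
      ∫⁻ x, (gaussCurv n K x /
          ENNReal.ofReal (suppFn K (gaussMap K x)) ^ ((p - 1) * n / p)) ^ (p / (n + p))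
        ∂(bdryMeasure n K) := by
  have := isFiniteMeasure_bdryMeasure hn hK
  have := isFiniteMeasure_curv0 hn K
  have := isFiniteMeasure_lpBdryMeasure (p := p) hK h0
  calc lpASA n p K
      = hellingerAffinity (p / (n + p)) (lpBdryMeasure n p K) (curv0 n K) :=
        le_antisymm (lpASA_le_hellingerAffinity hn hp) (hellingerAffinity_le_lpASA hn hp)
    _ = _ := hellingerAffinity_lpBdryMeasure hn hp hK h0

end
end

section
/- Let p > 0. The functional K ↦ Ω_p(K) defined on convex bodies with 0 in the interior by Ω_p(K) = inf over positive continuous g : ∂K → ℝ of (∫_{∂K} g^{-n} dC₀(K,·))^{p/(n+p)} (∫_{∂K} g^p (h_K∘ν_K)^{1-p} dC_{n-1}(K,·))^{n/(n+p)} is upper semi-continuous with respect to the Hausdorff metric. -/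
open MeasureTheory Metric Set Filter
open scoped RealInnerProductSpace ENNReal NNReal Topology

noncomputable section

/-!
For a fixed positive continuous `g` the functional under the infimum is already upper
semi-continuous, and an infimum of upper semi-continuous functionals is upper semi-continuous.

Both integrals are controlled through closedness of the relation that `u` is a unit outer normal of
`K` at `x`, jointly in `(K, x, u)`: wherever the limit body has a single normal (or a single support
point), any choice of normals (support points) of the approximating bodies converges to it.
Uniqueness almost everywhere is Rademacher's theorem. Outer normals at `x` are the linear functions
touching the gauge from below at `x`, support points in direction `u` those touching the support
function at `u`; both functions are Lipschitz and homogeneous, so it suffices to differentiate them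
on the facets of a cube, whose radial projection covers the boundary.

Hence `∫ f dC₀` converges, by dominated convergence on the sphere. For the boundary measure only the
inequality `limsup ≤` is needed: if `(1 + ε)⁻¹ L ⊆ int K`, then `y ↦ (nearest point of L to
(1 + ε) y)` is `(1 + ε)`-Lipschitz and maps `∂K` onto `∂L`, so `H^{n-1}` on `∂L` is at most
`(1 + ε)^{n-1}` times the image of `H^{n-1}` on `∂K`.
-/

section Charts

variable {m : ℕ}

/-- Parametrizes the hyperplane `{x | x i = s}` by the remaining coordinates. For `|s| = 1` and `w`
in the unit cube this is a facet of the cube `[-1, 1]ᵐ⁺¹`; the sup norm on `Fin m → ℝ` makes the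
Hausdorff measure of the parameter space equal to the Lebesgue measure. -/
def faceChart (i : Fin (m + 1)) (s : ℝ) (w : Fin m → ℝ) : Euc (m + 1) :=
  WithLp.toLp 2 (i.insertNth s w)

lemma exists_lipschitzWith_faceChart (i : Fin (m + 1)) (s : ℝ) :
    ∃ C, LipschitzWith C (faceChart i s) := by
  have hinsert : LipschitzWith 1 fun w : Fin m → ℝ => (i.insertNth s w : Fin (m + 1) → ℝ) :=
    LipschitzWith.mk_one fun v w => by simp [Fin.dist_insertNth_insertNth]
  exact ⟨_, (PiLp.lipschitzWith_toLp 2 _).comp hinsert⟩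

lemma inner_faceChart (i : Fin (m + 1)) (s : ℝ) (w : Fin m → ℝ) (u : Euc (m + 1)) :
    ⟪faceChart i s w, u⟫ = s * u i + ∑ j, w j * u (i.succAbove j) := by
  simp [faceChart, PiLp.inner_apply, Fin.sum_univ_succAbove _ i, mul_comm]

lemma one_le_norm_faceChart (i : Fin (m + 1)) {s : ℝ} (hs : |s| = 1) (w : Fin m → ℝ) :
    1 ≤ ‖faceChart i s w‖ := by
  simpa [faceChart, hs] using PiLp.norm_apply_le (faceChart i s w) i

lemma exists_eq_smul_faceChart {x : Euc (m + 1)} (hx : x ≠ 0) :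
    ∃ (i : Fin (m + 1)) (s t : ℝ) (w : Fin m → ℝ), s ∈ ({1, -1} : Set ℝ) ∧ 0 < t ∧
      w ∈ closedBall (0 : Fin m → ℝ) 1 ∧ x = t • faceChart i s w := by
  obtain ⟨i, hmax⟩ := Finite.exists_max fun j => |x j|
  have hi : 0 < |x i| := by
    refine abs_pos.2 fun hxi => hx ?_
    ext j
    simpa [hxi] using hmax j
  refine ⟨i, SignType.sign (x i), |x i|, fun j => |x i|⁻¹ * x (i.succAbove j), ?_, hi, ?_, ?_⟩
  · rcases lt_or_gt_of_ne (abs_pos.1 hi) with h | h <;> simp [h]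
  · rw [mem_closedBall_zero_iff, pi_norm_le_iff_of_nonneg zero_le_one]
    intro j
    rw [norm_mul, norm_inv, Real.norm_eq_abs, abs_abs, Real.norm_eq_abs, inv_mul_le_one₀ hi]
    exact hmax _
  · ext k
    rcases Fin.eq_self_or_eq_succAbove i k with rfl | ⟨j, rfl⟩
    · simp [faceChart]
    · simp [faceChart, hi.ne']

end Charts

section TouchingMinorant

/-- The linear function represented by `u` lies below `f` and touches it at `x`. For the support
function of a convex body this says that `u` is a point of the body with outer normal `x`. -/
def IsTouchingMinorantAt {E : Type*} [NormedAddCommGroup E] [InnerProductSpace ℝ E]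
    (f : E → ℝ) (u x : E) : Prop :=
  (∀ z, ⟪z, u⟫ ≤ f z) ∧ ⟪x, u⟫ = f x

variable {m : ℕ} {f : Euc (m + 1) → ℝ}

lemma hasFDerivAt_inner_faceChart (i : Fin (m + 1)) (s : ℝ) (u : Euc (m + 1)) (w : Fin m → ℝ) :
    HasFDerivAt (fun w => ⟪faceChart i s w, u⟫)
      (∑ j, u (i.succAbove j) • ContinuousLinearMap.proj (R := ℝ) (φ := fun _ => ℝ) j) w := by
  simp only [inner_faceChart]
  exact (HasFDerivAt.fun_sum fun j _ => (hasFDerivAt_apply j w).mul_const _).const_add _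

lemma IsTouchingMinorantAt.apply_succAbove {i : Fin (m + 1)} {s : ℝ} {w : Fin m → ℝ}
    {u : Euc (m + 1)} (hu : IsTouchingMinorantAt f u (faceChart i s w))
    (hf : DifferentiableAt ℝ (f ∘ faceChart i s) w) (j : Fin m) :
    u (i.succAbove j) = fderiv ℝ (f ∘ faceChart i s) w (Pi.single j 1) := by
  have hmin : IsLocalMin ((f ∘ faceChart i s) - fun w => ⟪faceChart i s w, u⟫) w :=
    Eventually.of_forall fun z => by
      simpa [hu.2] using hu.1 (faceChart i s z)
  have hzero := hmin.hasFDerivAt_eq_zero (hf.hasFDerivAt.sub (hasFDerivAt_inner_faceChart i s u w))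
  rw [sub_eq_zero.1 hzero]
  simp [Pi.single_apply]

lemma IsTouchingMinorantAt.unique {i : Fin (m + 1)} {s : ℝ} (hs : s ≠ 0) {w : Fin m → ℝ}
    (hf : DifferentiableAt ℝ (f ∘ faceChart i s) w) {u v : Euc (m + 1)}
    (hu : IsTouchingMinorantAt f u (faceChart i s w))
    (hv : IsTouchingMinorantAt f v (faceChart i s w)) : u = v := by
  have htangential : ∀ j, u (i.succAbove j) = v (i.succAbove j) := fun j =>
    (hu.apply_succAbove hf j).trans (hv.apply_succAbove hf j).symm
  have hvalue : s * u i = s * v i := by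
    simpa [inner_faceChart, htangential] using hu.2.trans hv.2.symm
  ext k
  rcases Fin.eq_self_or_eq_succAbove i k with rfl | ⟨j, rfl⟩
  · exact mul_left_cancel₀ hs hvalue
  · exact htangential j

end TouchingMinorant

section RadialProjection

variable {E : Type*} [NormedAddCommGroup E] [NormedSpace ℝ E] {K : Set E}

/-- The central projection from the origin onto the boundary of `K`. -/
def radialProj (K : Set E) (x : E) : E := (gauge K x)⁻¹ • x

lemma norm_inv_smul_sub_inv_smul_le (x y : E) {a b : ℝ} (ha : 0 < a) (hb : 0 < b) :
    ‖a⁻¹ • x - b⁻¹ • y‖ ≤ a⁻¹ * ‖x - y‖ + a⁻¹ * |a - b| * (b⁻¹ * ‖y‖) := by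
  have hsplit : a⁻¹ • x - b⁻¹ • y = a⁻¹ • (x - y) - (a⁻¹ * (a - b)) • (b⁻¹ • y) := by
    rw [smul_smul, smul_sub, sub_sub, ← add_smul]
    congr 2
    field_simp
    ring
  rw [hsplit]
  refine (norm_sub_le _ _).trans_eq ?_
  simp only [norm_smul, norm_mul, norm_inv, Real.norm_eq_abs, abs_of_pos ha, abs_of_pos hb]

lemma exists_lipschitzOnWith_radialProj (hconv : Convex ℝ K) (h0 : K ∈ 𝓝 0)
    (hbdd : Bornology.IsBounded K) :
    ∃ C, LipschitzOnWith C (radialProj K) {x | 1 ≤ ‖x‖} := by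
  obtain ⟨r, hr, hrK⟩ := Metric.nhds_basis_ball.mem_iff.1 h0
  obtain ⟨R, hR, hKR⟩ := hbdd.subset_closedBall_lt 0 0
  lift r to ℝ≥0 using hr.le
  have hlip : LipschitzWith r⁻¹ (gauge K) := hconv.lipschitzWith_gauge (mod_cast hr) hrK
  have hlower : ∀ x, R⁻¹ * ‖x‖ ≤ gauge K x := fun x => by
    simpa [div_eq_inv_mul] using
      le_gauge_of_subset_closedBall (absorbent_nhds_zero h0) hR.le hKR (x := x)
  refine ⟨(R + R * r⁻¹ * R).toNNReal, LipschitzOnWith.of_dist_le_mul fun x hx y hy => ?_⟩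
  have hgauge : ∀ {z : E}, 1 ≤ ‖z‖ → R⁻¹ ≤ gauge K z := fun {z} hz =>
    (le_mul_of_one_le_right (by positivity) hz).trans (hlower z)
  have hgx := (inv_pos.2 hR).trans_le (hgauge hx)
  have hgy := (inv_pos.2 hR).trans_le (hgauge hy)
  have hinv : (gauge K x)⁻¹ ≤ R := inv_le_of_inv_le₀ hR (hgauge hx)
  have hproj : (gauge K y)⁻¹ * ‖y‖ ≤ R := by
    rw [inv_mul_le_iff₀ hgy, ← div_le_iff₀ hR, div_eq_inv_mul]
    exact hlower y
  have hdiff : |gauge K x - gauge K y| ≤ r⁻¹ * ‖x - y‖ := by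
    simpa [Real.dist_eq, dist_eq_norm] using hlip.dist_le_mul x y
  rw [dist_eq_norm, dist_eq_norm, Real.coe_toNNReal _ (by positivity)]
  calc ‖radialProj K x - radialProj K y‖
      ≤ (gauge K x)⁻¹ * ‖x - y‖
          + (gauge K x)⁻¹ * |gauge K x - gauge K y| * ((gauge K y)⁻¹ * ‖y‖) :=
        norm_inv_smul_sub_inv_smul_le x y hgx hgy
    _ ≤ R * ‖x - y‖ + R * (r⁻¹ * ‖x - y‖) * R := by gcongr
    _ = (R + R * r⁻¹ * R) * ‖x - y‖ := by ring

lemma radialProj_smul_of_mem_frontier (hconv : Convex ℝ K) (h0 : K ∈ 𝓝 0) {t : ℝ} (ht : 0 < t)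
    {x : E} (hx : t • x ∈ frontier K) : radialProj K x = t • x := by
  have hgauge : t * gauge K x = 1 := by
    rw [← smul_eq_mul, ← gauge_smul_of_nonneg ht.le]
    exact (gauge_eq_one_iff_mem_frontier hconv h0).2 hx
  rw [radialProj, ← eq_inv_of_mul_eq_one_left hgauge]

end RadialProjection

section FrontierMeasure

variable {m : ℕ} {K : Set (Euc (m + 1))}

lemma exists_lipschitzWith_radialProj_faceChart (hconv : Convex ℝ K) (h0 : K ∈ 𝓝 0)
    (hbdd : Bornology.IsBounded K) (i : Fin (m + 1)) {s : ℝ} (hs : |s| = 1) :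
    ∃ C, LipschitzWith C (radialProj K ∘ faceChart i s) := by
  obtain ⟨C, hC⟩ := exists_lipschitzOnWith_radialProj hconv h0 hbdd
  obtain ⟨D, hD⟩ := exists_lipschitzWith_faceChart i s
  refine ⟨C * D, lipschitzOnWith_univ.1 ?_⟩
  exact hC.comp hD.lipschitzOnWith fun w _ => one_le_norm_faceChart i hs w

lemma hausdorffMeasure_radialProj_faceChart_image_le (hconv : Convex ℝ K) (h0 : K ∈ 𝓝 0)
    (hbdd : Bornology.IsBounded K) (i : Fin (m + 1)) {s : ℝ} (hs : s ∈ ({1, -1} : Set ℝ)) :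
    ∃ C : ℝ≥0, ∀ A : Set (Fin m → ℝ),
      μH[m] ((radialProj K ∘ faceChart i s) '' A) ≤ C * volume A := by
  have hs' : |s| = 1 := by rcases hs with rfl | rfl <;> simp
  obtain ⟨C, hC⟩ := exists_lipschitzWith_radialProj_faceChart hconv h0 hbdd i hs'
  have hvol : (μH[m] : Measure (Fin m → ℝ)) = volume := by
    simpa using hausdorffMeasure_pi_real (ι := Fin m)
  refine ⟨C ^ m, fun A => ?_⟩
  simpa [hvol] using hC.hausdorffMeasure_image_le m.cast_nonneg A

lemma exists_mem_frontier_eq_smul_faceChart (hconv : Convex ℝ K) (h0 : K ∈ 𝓝 0)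
    {x : Euc (m + 1)} (hx : x ∈ frontier K) :
    ∃ (i : Fin (m + 1)) (s t : ℝ) (w : Fin m → ℝ), s ∈ ({1, -1} : Set ℝ) ∧ 0 < t ∧
      w ∈ closedBall (0 : Fin m → ℝ) 1 ∧ x = t • faceChart i s w ∧
      (radialProj K ∘ faceChart i s) w = x := by
  have hx0 : x ≠ 0 := fun h => hx.2 (h ▸ mem_interior_iff_mem_nhds.2 h0)
  obtain ⟨i, s, t, w, hs, ht, hw, rfl⟩ := exists_eq_smul_faceChart hx0
  exact ⟨i, s, t, w, hs, ht, hw, rfl, radialProj_smul_of_mem_frontier hconv h0 ht hx⟩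

theorem hausdorffMeasure_frontier_lt_top (hconv : Convex ℝ K) (h0 : K ∈ 𝓝 0)
    (hbdd : Bornology.IsBounded K) : μH[m] (frontier K) < ∞ := by
  have hcover : frontier K ⊆ ⋃ a ∈ (univ ×ˢ {1, -1} : Set (Fin (m + 1) × ℝ)),
      (radialProj K ∘ faceChart a.1 a.2) '' closedBall 0 1 := by
    intro x hx
    obtain ⟨i, s, -, w, hs, -, hw, -, hproj⟩ := exists_mem_frontier_eq_smul_faceChart hconv h0 hx
    exact mem_biUnion (show (i, s) ∈ _ from ⟨trivial, hs⟩) ⟨w, hw, hproj⟩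
  refine (measure_mono hcover).trans_lt (measure_biUnion_lt_top (toFinite _) fun a ha => ?_)
  obtain ⟨C, hC⟩ := hausdorffMeasure_radialProj_faceChart_image_le hconv h0 hbdd a.1 ha.2
  exact (hC _).trans_lt (ENNReal.mul_lt_top ENNReal.coe_lt_top measure_closedBall_lt_top)

theorem ae_subsingleton_isTouchingMinorantAt (hconv : Convex ℝ K) (h0 : K ∈ 𝓝 0)
    (hbdd : Bornology.IsBounded K) {f : Euc (m + 1) → ℝ} {C : ℝ≥0} (hf : LipschitzWith C f)
    (hhom : ∀ t : ℝ, 0 < t → ∀ x, f (t • x) = t * f x) :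
    ∀ᵐ x ∂μH[m].restrict (frontier K), {u | IsTouchingMinorantAt f u x}.Subsingleton := by
  let N (i : Fin (m + 1)) (s : ℝ) : Set (Fin m → ℝ) :=
    {w | ¬DifferentiableAt ℝ (f ∘ faceChart i s) w}
  have hN : ∀ i s, volume (N i s) = 0 := fun i s => by
    obtain ⟨D, hD⟩ := exists_lipschitzWith_faceChart i s
    exact (hf.comp hD).ae_differentiableAt
  have hcover : {x ∈ frontier K | ¬{u | IsTouchingMinorantAt f u x}.Subsingleton} ⊆
      ⋃ a ∈ (univ ×ˢ {1, -1} : Set (Fin (m + 1) × ℝ)),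
        (radialProj K ∘ faceChart a.1 a.2) '' N a.1 a.2 := by
    rintro x ⟨hx, hnot⟩
    obtain ⟨i, s, t, w, hs, ht, -, rfl, hproj⟩ := exists_mem_frontier_eq_smul_faceChart hconv h0 hx
    have hs0 : s ≠ 0 := by rcases hs with rfl | rfl <;> norm_num
    have hscale : ∀ {u}, IsTouchingMinorantAt f u (t • faceChart i s w) →
        IsTouchingMinorantAt f u (faceChart i s w) := fun {u} hu => by
      refine ⟨hu.1, mul_left_cancel₀ ht.ne' ?_⟩
      rw [← hhom t ht, ← hu.2, real_inner_smul_left]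
    refine mem_biUnion (show (i, s) ∈ _ from ⟨trivial, hs⟩) ⟨w, fun hdiff => hnot ?_, hproj⟩
    exact fun u hu v hv => (hscale hu).unique hs0 hdiff (hscale hv)
  rw [ae_restrict_iff' isClosed_frontier.measurableSet, ae_iff]
  simp only [Classical.not_imp]
  refine measure_mono_null hcover
    ((measure_biUnion_null_iff (toFinite _).countable).2 fun a ha => ?_)
  obtain ⟨C', hC'⟩ := hausdorffMeasure_radialProj_faceChart_image_le hconv h0 hbdd a.1 ha.2
  exact le_antisymm ((hC' _).trans_eq (by rw [hN, mul_zero])) bot_le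

end FrontierMeasure

section HausdorffDistance

variable {V : Type*} [NormedAddCommGroup V] [NormedSpace ℝ V]

lemma exists_mem_dist_le_dist_convexBody {K L : ConvexBody V} {x : V} (hx : x ∈ L) :
    ∃ y ∈ K, dist x y ≤ dist L K := by
  obtain ⟨y, hy, hxy⟩ := K.isCompact.exists_infDist_eq_dist K.nonempty x
  exact ⟨y, hy, hxy ▸ infDist_le_hausdorffDist_of_mem hx ConvexBody.hausdorffEDist_ne_top⟩

lemma continuous_infDist_convexBody :
    Continuous fun a : ConvexBody V × V => infDist a.2 (a.1 : Set V) := by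
  refine (LipschitzWith.uncurry (f := fun (L : ConvexBody V) z => infDist z (L : Set V))
    (fun z => LipschitzWith.of_le_add fun L K => ?_) fun L => lipschitz_infDist_pt _).continuous
  rw [dist_comm]
  exact infDist_le_infDist_add_hausdorffDist ConvexBody.hausdorffEDist_ne_top

lemma isClosed_setOf_mem_convexBody : IsClosed {a : ConvexBody V × V | a.2 ∈ a.1} := by
  have hmem : {a : ConvexBody V × V | a.2 ∈ a.1} = {a | infDist a.2 (a.1 : Set V) = 0} := by
    ext a
    exact a.1.isClosed.mem_iff_infDist_zero a.1.nonempty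
  rw [hmem]
  exact isClosed_eq continuous_infDist_convexBody continuous_const

lemma exists_eventually_subset_closedBall (K : ConvexBody V) :
    ∃ R, ∀ᶠ L : ConvexBody V in 𝓝 K, (L : Set V) ⊆ closedBall 0 R := by
  obtain ⟨R, hR⟩ := K.isBounded.subset_closedBall 0
  refine ⟨R + 1, ?_⟩
  filter_upwards [ball_mem_nhds K one_pos] with L hL x hx
  obtain ⟨y, hy, hxy⟩ := exists_mem_dist_le_dist_convexBody (K := K) hx
  have hy0 : dist y 0 ≤ R := hR hy
  rw [mem_ball] at hL
  rw [mem_closedBall]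
  linarith [dist_triangle x y 0]

end HausdorffDistance

section SupportFunction

lemma suppFn_smul {n : ℕ} (K : Set (Euc n)) {t : ℝ} (ht : 0 ≤ t) (u : Euc n) :
    suppFn K (t • u) = t * suppFn K u := by
  rw [suppFn, suppFn, ← smul_eq_mul, ← Real.sSup_smul_of_nonneg ht, ← image_smul, image_image]
  simp only [real_inner_smul_right, smul_eq_mul]

variable {n : ℕ} (K L : ConvexBody (Euc n))

lemma inner_le_suppFn {x : Euc n} (hx : x ∈ K) (u : Euc n) : ⟪x, u⟫ ≤ suppFn K u :=
  le_csSup (K.isCompact.image (by fun_prop)).bddAbove ⟨x, hx, rfl⟩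

lemma exists_suppFn_eq_inner (u : Euc n) : ∃ x ∈ K, suppFn K u = ⟪x, u⟫ :=
  K.isCompact.exists_sSup_image_eq K.nonempty (by fun_prop)

lemma suppFn_le_add_norm_mul {R : ℝ} (hR : (K : Set (Euc n)) ⊆ closedBall 0 R) (u v : Euc n) :
    suppFn K u ≤ suppFn K v + R * ‖u - v‖ := by
  obtain ⟨x, hx, hxu⟩ := exists_suppFn_eq_inner K u
  have hxR : ‖x‖ ≤ R := by simpa using hR hx
  calc suppFn K u = ⟪x, v⟫ + ⟪x, u - v⟫ := by rw [hxu, inner_sub_right]; ring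
    _ ≤ suppFn K v + ‖x‖ * ‖u - v‖ := add_le_add (inner_le_suppFn K hx v) (real_inner_le_norm _ _)
    _ ≤ suppFn K v + R * ‖u - v‖ := by gcongr

lemma exists_lipschitzWith_suppFn : ∃ C, LipschitzWith C (suppFn (K : Set (Euc n))) := by
  obtain ⟨R, hR⟩ := K.isBounded.subset_closedBall 0
  refine ⟨R.toNNReal, LipschitzWith.of_le_add_mul' _ fun u v => ?_⟩
  rw [dist_eq_norm]
  exact suppFn_le_add_norm_mul K hR u v

lemma suppFn_le_add_dist_mul (u : Euc n) : suppFn L u ≤ suppFn K u + dist L K * ‖u‖ := by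
  obtain ⟨x, hx, hxu⟩ := exists_suppFn_eq_inner L u
  obtain ⟨y, hy, hxy⟩ := exists_mem_dist_le_dist_convexBody (K := K) hx
  calc suppFn L u = ⟪y, u⟫ + ⟪x - y, u⟫ := by rw [hxu, inner_sub_left]; ring
    _ ≤ suppFn K u + ‖x - y‖ * ‖u‖ := add_le_add (inner_le_suppFn K hy u) (real_inner_le_norm _ _)
    _ ≤ suppFn K u + dist L K * ‖u‖ := by rw [← dist_eq_norm]; gcongr

lemma continuous_suppFn : Continuous fun a : ConvexBody (Euc n) × Euc n => suppFn a.1 a.2 := by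
  refine continuous_iff_continuousAt.2 fun ⟨K, u⟩ => ?_
  obtain ⟨C, hC⟩ := exists_lipschitzWith_suppFn K
  have hbound : ∀ a : ConvexBody (Euc n) × Euc n,
      dist (suppFn a.1 a.2) (suppFn K u) ≤ dist a.1 K * ‖a.2‖ + C * dist a.2 u := fun ⟨L, v⟩ => by
    refine (dist_triangle _ (suppFn K v) _).trans (add_le_add ?_ (hC.dist_le_mul v u))
    have hLK := suppFn_le_add_dist_mul K L v
    have hKL := suppFn_le_add_dist_mul L K v
    rw [dist_comm] at hKL
    rw [Real.dist_eq, abs_le]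
    constructor <;> linarith
  refine tendsto_iff_dist_tendsto_zero.2 (squeeze_zero (fun _ => dist_nonneg) hbound ?_)
  have hcont : Continuous fun a : ConvexBody (Euc n) × Euc n =>
      dist a.1 K * ‖a.2‖ + C * dist a.2 u := by fun_prop
  simpa using hcont.tendsto (K, u)

lemma le_suppFn_of_closedBall_subset {r : ℝ} (hr : 0 ≤ r) (hrK : closedBall 0 r ⊆ (K : Set (Euc n)))
    {u : Euc n} (hu : ‖u‖ = 1) : r ≤ suppFn K u := by
  have hmem : r • u ∈ K := hrK (by simp [norm_smul, hu, abs_of_nonneg hr])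
  simpa [real_inner_smul_left, hu] using inner_le_suppFn K hmem u

lemma exists_pos_eventually_le_suppFn (h0 : (K : Set (Euc n)) ∈ 𝓝 0) :
    ∃ r > 0, ∀ᶠ L : ConvexBody (Euc n) in 𝓝 K, ∀ u : Euc n, ‖u‖ = 1 → r ≤ suppFn L u := by
  obtain ⟨r, hr, hrK⟩ := nhds_basis_closedBall.mem_iff.1 h0
  refine ⟨r / 2, half_pos hr, ?_⟩
  filter_upwards [ball_mem_nhds K (half_pos hr)] with L hL u hu
  have hK := le_suppFn_of_closedBall_subset K hr.le hrK hu
  have hKL := suppFn_le_add_dist_mul L K u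
  rw [hu, mul_one, dist_comm] at hKL
  rw [mem_ball] at hL
  linarith

end SupportFunction

section OuterNormals

lemma ne_zero_of_norm_eq_one {E : Type*} [NormedAddCommGroup E] {u : E} (hu : ‖u‖ = 1) : u ≠ 0 :=
  norm_ne_zero_iff.1 (hu ▸ one_ne_zero)

variable {n : ℕ}

lemma IsOuterNormalAt.suppFn_eq {K : Set (Euc n)} (hK : IsClosed K) {u x : Euc n}
    (h : IsOuterNormalAt K u x) : suppFn K u = ⟪x, u⟫ :=
  IsGreatest.csSup_eq ⟨⟨x, hK.frontier_subset h.1, rfl⟩, forall_mem_image.2 h.2⟩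

lemma mem_frontier_of_forall_inner_le {K : Set (Euc n)} {u x : Euc n} (hu : u ≠ 0) (hx : x ∈ K)
    (h : ∀ y ∈ K, ⟪y, u⟫ ≤ ⟪x, u⟫) : x ∈ frontier K := by
  refine ⟨subset_closure hx, fun hint => ?_⟩
  have hray : Tendsto (fun t : ℝ => x + t • u) (𝓝[>] 0) (𝓝 x) := by
    have hcont : Continuous fun t : ℝ => x + t • u := by fun_prop
    simpa using (hcont.tendsto 0).mono_left nhdsWithin_le_nhds
  obtain ⟨t, htK, ht⟩ :=
    ((hray.eventually (mem_interior_iff_mem_nhds.1 hint)).and self_mem_nhdsWithin).exists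
  have hle := h _ htK
  rw [inner_add_left, real_inner_smul_left] at hle
  linarith [mul_pos ht (real_inner_self_pos.2 hu)]

lemma isOuterNormalAt_iff {K : ConvexBody (Euc n)} {u x : Euc n} (hu : u ≠ 0) :
    IsOuterNormalAt K u x ↔ x ∈ K ∧ suppFn K u ≤ ⟪x, u⟫ := by
  refine ⟨fun h => ⟨K.isClosed.frontier_subset h.1, (h.suppFn_eq K.isClosed).le⟩,
    fun ⟨hx, h⟩ => ?_⟩
  have hmax : ∀ y ∈ (K : Set (Euc n)), ⟪y, u⟫ ≤ ⟪x, u⟫ := fun y hy =>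
    (inner_le_suppFn K hy u).trans h
  exact ⟨mem_frontier_of_forall_inner_le hu hx hmax, hmax⟩

lemma isClosed_setOf_isOuterNormalAt :
    IsClosed {a : ConvexBody (Euc n) × Euc n × Euc n |
      ‖a.2.2‖ = 1 ∧ IsOuterNormalAt a.1 a.2.2 a.2.1} := by
  have hset : {a : ConvexBody (Euc n) × Euc n × Euc n |
      ‖a.2.2‖ = 1 ∧ IsOuterNormalAt a.1 a.2.2 a.2.1} =
      {a | ‖a.2.2‖ = 1} ∩ ((fun a => (a.1, a.2.1)) ⁻¹' {b | b.2 ∈ b.1} ∩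
        {a | suppFn a.1 a.2.2 ≤ ⟪a.2.1, a.2.2⟫}) := by
    ext ⟨K, x, u⟩
    exact and_congr_right fun hu => isOuterNormalAt_iff (ne_zero_of_norm_eq_one hu)
  have hsupp : Continuous fun a : ConvexBody (Euc n) × Euc n × Euc n => suppFn a.1 a.2.2 :=
    continuous_suppFn.comp (by fun_prop : Continuous fun a : ConvexBody (Euc n) × Euc n × Euc n =>
      (a.1, a.2.2))
  rw [hset]
  exact (isClosed_eq (by fun_prop) continuous_const).inter
    ((isClosed_setOf_mem_convexBody.preimage (by fun_prop)).inter
      (isClosed_le hsupp (by fun_prop)))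

lemma exists_norm_eq_one_and_isOuterNormalAt {K : Set (Euc n)} (hK : Convex ℝ K)
    (hint : (interior K).Nonempty) {x : Euc n} (hx : x ∈ frontier K) :
    ∃ u, ‖u‖ = 1 ∧ IsOuterNormalAt K u x := by
  obtain ⟨f, hf⟩ := geometric_hahn_banach_open_point hK.interior isOpen_interior hx.2
  obtain ⟨v, rfl⟩ := (InnerProductSpace.toDual ℝ (Euc n)).surjective f
  simp only [InnerProductSpace.toDual_apply_apply] at hf
  have hv : v ≠ 0 := by
    rintro rfl
    obtain ⟨y, hy⟩ := hint
    simpa using hf y hy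
  have hmax : ∀ y ∈ K, ⟪v, y⟫ ≤ ⟪v, x⟫ := fun y hy => by
    have hy' : y ∈ closure (interior K) := by
      rw [hK.closure_interior_eq_closure_of_nonempty_interior hint]
      exact subset_closure hy
    have hclosed : IsClosed {z : Euc n | ⟪v, z⟫ ≤ ⟪v, x⟫} := isClosed_le (by fun_prop) (by fun_prop)
    exact closure_minimal (fun z hz => (hf z hz).le) hclosed hy'
  refine ⟨‖v‖⁻¹ • v, norm_smul_inv_norm hv, hx, fun y hy => ?_⟩
  rw [real_inner_smul_right, real_inner_smul_right, real_inner_comm, real_inner_comm v x]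
  exact mul_le_mul_of_nonneg_left (hmax y hy) (by positivity)

lemma gaussMap_spec {K : Set (Euc n)} (hK : Convex ℝ K) (hint : (interior K).Nonempty) {x : Euc n}
    (hx : x ∈ frontier K) : ‖gaussMap K x‖ = 1 ∧ IsOuterNormalAt K (gaussMap K x) x := by
  have hex := exists_norm_eq_one_and_isOuterNormalAt hK hint hx
  rw [gaussMap, dif_pos hex]
  exact hex.choose_spec

lemma gaussMapInv_spec (K : ConvexBody (Euc n)) {u : Euc n} (hu : u ≠ 0) :
    IsOuterNormalAt K u (gaussMapInv K u) := by
  have hex : ∃ x, IsOuterNormalAt K u x := by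
    obtain ⟨x, hx, hxu⟩ := exists_suppFn_eq_inner K u
    exact ⟨x, (isOuterNormalAt_iff hu).2 ⟨hx, hxu.le⟩⟩
  rw [gaussMapInv, dif_pos hex]
  exact hex.choose_spec

lemma IsOuterNormalAt.inner_pos {K : ConvexBody (Euc n)} (h0 : (K : Set (Euc n)) ∈ 𝓝 0)
    {u x : Euc n} (hu : ‖u‖ = 1) (h : IsOuterNormalAt K u x) : 0 < ⟪x, u⟫ := by
  obtain ⟨r, hr, hrK⟩ := nhds_basis_closedBall.mem_iff.1 h0
  rw [← h.suppFn_eq K.isClosed]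
  exact hr.trans_le (le_suppFn_of_closedBall_subset K hr.le hrK hu)

lemma IsOuterNormalAt.isTouchingMinorantAt_gauge {K : Set (Euc n)} (hK : Convex ℝ K)
    (h0 : K ∈ 𝓝 0) {u x : Euc n} (hpos : 0 < ⟪x, u⟫) (h : IsOuterNormalAt K u x) :
    IsTouchingMinorantAt (gauge K) (⟪x, u⟫⁻¹ • u) x := by
  refine ⟨fun z => le_of_forall_gt_imp_ge_of_dense fun a ha => ?_, ?_⟩
  · obtain ⟨b, hb, hba, w, hw, rfl⟩ := exists_lt_of_gauge_lt (absorbent_nhds_zero h0) ha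
    simp only [real_inner_smul_right, real_inner_smul_left]
    calc ⟪x, u⟫⁻¹ * (b * ⟪w, u⟫) ≤ ⟪x, u⟫⁻¹ * (b * ⟪x, u⟫) := by
          gcongr
          exact h.2 w hw
      _ = b := by field_simp
      _ ≤ a := hba.le
  · rw [real_inner_smul_right, inv_mul_cancel₀ hpos.ne',
      (gauge_eq_one_iff_mem_frontier hK h0).2 h.1]

variable {m : ℕ}

theorem ae_subsingleton_setOf_normal {K : ConvexBody (Euc (m + 1))}
    (h0 : (K : Set (Euc (m + 1))) ∈ 𝓝 0) :
    ∀ᵐ x ∂μH[m].restrict (frontier (K : Set (Euc (m + 1)))),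
      {u | ‖u‖ = 1 ∧ IsOuterNormalAt K u x}.Subsingleton := by
  obtain ⟨r, hr, hrK⟩ := nhds_basis_ball.mem_iff.1 h0
  lift r to ℝ≥0 using hr.le
  have hlip := K.convex.lipschitzWith_gauge (mod_cast hr) hrK
  filter_upwards [ae_subsingleton_isTouchingMinorantAt K.convex h0 K.isBounded hlip
    fun t ht x => gauge_smul_of_nonneg ht.le x] with x hx u hu v hv
  have hupos := hu.2.inner_pos h0 hu.1
  have hvpos := hv.2.inner_pos h0 hv.1
  have heq := hx (hu.2.isTouchingMinorantAt_gauge K.convex h0 hupos)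
    (hv.2.isTouchingMinorantAt_gauge K.convex h0 hvpos)
  refine (sameRay_iff_of_norm_eq (hu.1.trans hv.1.symm)).1 ?_
  exact Or.inr (Or.inr ⟨_, _, inv_pos.2 hupos, inv_pos.2 hvpos, heq⟩)

theorem ae_subsingleton_setOf_supportPoint (K : ConvexBody (Euc (m + 1))) :
    ∀ᵐ u ∂μH[m].restrict (sphere (0 : Euc (m + 1)) 1),
      {x | IsOuterNormalAt K u x}.Subsingleton := by
  obtain ⟨C, hC⟩ := exists_lipschitzWith_suppFn K
  have hball := ae_subsingleton_isTouchingMinorantAt (convex_closedBall (0 : Euc (m + 1)) 1)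
    (closedBall_mem_nhds 0 one_pos) isBounded_closedBall hC fun t ht x => suppFn_smul K ht.le x
  rw [frontier_closedBall _ one_ne_zero] at hball
  have htouch : ∀ u x : Euc (m + 1), IsOuterNormalAt K u x →
      IsTouchingMinorantAt (suppFn K) x u := by
    refine fun u x hx => ⟨fun z => ?_, ?_⟩
    · rw [real_inner_comm]
      exact inner_le_suppFn K (K.isClosed.frontier_subset hx.1) z
    · rw [real_inner_comm, hx.suppFn_eq K.isClosed]
  filter_upwards [hball] with u hu x hx y hy
  exact hu (htouch u x hx) (htouch u y hy)

lemma hausdorffMeasure_sphere_lt_top (m : ℕ) :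
    μH[m] (sphere (0 : Euc (m + 1)) 1) < ∞ := by
  rw [← frontier_closedBall _ one_ne_zero]
  exact hausdorffMeasure_frontier_lt_top (convex_closedBall _ _) (closedBall_mem_nhds 0 one_pos)
    isBounded_closedBall

end OuterNormals

section ClosedGraph

lemma tendsto_of_isClosed_graph {α X Y : Type*} [TopologicalSpace X] [TopologicalSpace Y]
    {r : Set (X × Y)} (hr : IsClosed r) {C : Set Y} (hC : IsCompact C) {l : Filter α} {φ : α → X}
    {ψ : α → Y} {x : X} {y : Y} (hφ : Tendsto φ l (𝓝 x)) (hψ : ∀ᶠ a in l, ψ a ∈ C)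
    (hmem : ∀ᶠ a in l, (φ a, ψ a) ∈ r) (huniq : ∀ z, (x, z) ∈ r → z = y) : Tendsto ψ l (𝓝 y) := by
  refine hC.tendsto_nhds_of_unique_mapClusterPt hψ fun z _ hz => huniq z ?_
  obtain ⟨U, hU, hψU⟩ := mapClusterPt_iff_ultrafilter.1 hz
  exact hr.mem_of_tendsto ((hφ.mono_left hU).prodMk_nhds hψU) (hU hmem)

variable {n : ℕ} {ι : Type*} {l : Filter ι} {L : ι → ConvexBody (Euc n)} {K : ConvexBody (Euc n)}

lemma gaussMapInv_mem (K : ConvexBody (Euc n)) {u : Euc n} (hu : u ≠ 0) : gaussMapInv K u ∈ K :=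
  K.isClosed.frontier_subset (gaussMapInv_spec K hu).1

lemma tendsto_gaussMapInv (hL : Tendsto L l (𝓝 K)) {u : ι → Euc n} {v : Euc n}
    (hu : Tendsto u l (𝓝 v)) (hunit : ∀ᶠ i in l, ‖u i‖ = 1)
    (hv : {x | IsOuterNormalAt K v x}.Subsingleton) :
    Tendsto (fun i => gaussMapInv (L i) (u i)) l (𝓝 (gaussMapInv K v)) := by
  have hswap : Continuous fun a : (ConvexBody (Euc n) × Euc n) × Euc n => (a.1.1, a.2, a.1.2) := by
    fun_prop
  obtain ⟨R, hR⟩ := exists_eventually_subset_closedBall K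
  refine tendsto_of_isClosed_graph (isClosed_setOf_isOuterNormalAt.preimage hswap)
    (isCompact_closedBall 0 R) (hL.prodMk_nhds hu) ?_ ?_ ?_
  · filter_upwards [hunit, hL.eventually hR] with i hi hLR
    exact hLR (gaussMapInv_mem _ (ne_zero_of_norm_eq_one hi))
  · filter_upwards [hunit] with i hi
    exact ⟨hi, gaussMapInv_spec _ (ne_zero_of_norm_eq_one hi)⟩
  · exact fun x hx => hv hx.2 (gaussMapInv_spec _ (ne_zero_of_norm_eq_one hx.1))

lemma tendsto_outerNormal (hint : (interior (K : Set (Euc n))).Nonempty) (hL : Tendsto L l (𝓝 K))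
    {x u : ι → Euc n} {y : Euc n} (hx : Tendsto x l (𝓝 y))
    (hu : ∀ᶠ i in l, ‖u i‖ = 1 ∧ IsOuterNormalAt (L i) (u i) (x i))
    (hy : {v | ‖v‖ = 1 ∧ IsOuterNormalAt K v y}.Subsingleton) :
    Tendsto u l (𝓝 (gaussMap K y)) := by
  have hassoc : Continuous fun a : (ConvexBody (Euc n) × Euc n) × Euc n => (a.1.1, a.1.2, a.2) := by
    fun_prop
  refine tendsto_of_isClosed_graph (isClosed_setOf_isOuterNormalAt.preimage hassoc)
    (isCompact_sphere 0 1) (hL.prodMk_nhds hx) (hu.mono fun i hi => ?_) hu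
    fun v hv => hy hv (gaussMap_spec K.convex hint hv.2.1)
  simpa using hi.1

end ClosedGraph

section DominatedConvergence

variable {Ω X : Type*} [MeasurableSpace Ω] [TopologicalSpace X] {μ : Measure Ω} [IsFiniteMeasure μ]
  {C : Set X} {F : X → ℝ≥0}

lemma exists_forall_coe_le_of_isCompact (hC : IsCompact C) (hF : Continuous F) :
    ∃ M : ℝ≥0, ∀ x ∈ C, (F x : ℝ≥0∞) ≤ M := by
  obtain ⟨M, hM⟩ := hC.bddAbove_image hF.continuousOn
  exact ⟨M, fun x hx => ENNReal.coe_le_coe.2 (hM ⟨x, hx, rfl⟩)⟩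

lemma lintegral_comp_lt_top (hC : IsCompact C) (hF : Continuous F) {ψ : Ω → X}
    (hψ : ∀ᵐ ω ∂μ, ψ ω ∈ C) : ∫⁻ ω, F (ψ ω) ∂μ < ∞ := by
  obtain ⟨M, hM⟩ := exists_forall_coe_le_of_isCompact hC hF
  calc ∫⁻ ω, F (ψ ω) ∂μ ≤ ∫⁻ _, M ∂μ := lintegral_mono_ae (hψ.mono fun ω hω => hM _ hω)
    _ < ∞ := by
      rw [lintegral_const]
      exact ENNReal.mul_lt_top ENNReal.coe_lt_top (measure_lt_top μ univ)

lemma tendsto_lintegral_comp [MeasurableSpace X] [BorelSpace X] {ι : Type*} {l : Filter ι}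
    [l.IsCountablyGenerated] (hC : IsCompact C) (hF : Continuous F) {ψ : ι → Ω → X} {ψ₀ : Ω → X}
    (hmeas : ∀ᶠ i in l, AEMeasurable (ψ i) μ) (hψ : ∀ᶠ i in l, ∀ᵐ ω ∂μ, ψ i ω ∈ C)
    (hlim : ∀ᵐ ω ∂μ, Tendsto (fun i => ψ i ω) l (𝓝 (ψ₀ ω))) :
    Tendsto (fun i => ∫⁻ ω, F (ψ i ω) ∂μ) l (𝓝 (∫⁻ ω, F (ψ₀ ω) ∂μ)) := by
  obtain ⟨M, hM⟩ := exists_forall_coe_le_of_isCompact hC hF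
  refine tendsto_lintegral_filter_of_dominated_convergence' (fun _ => M) ?_ ?_ ?_ ?_
  · exact hmeas.mono fun i hi => (hF.measurable.comp_aemeasurable hi).coe_nnreal_ennreal
  · exact hψ.mono fun i hi => hi.mono fun ω hω => hM _ hω
  · rw [lintegral_const]
    exact ENNReal.mul_ne_top ENNReal.coe_ne_top (measure_ne_top μ univ)
  · exact hlim.mono fun ω hω => ENNReal.tendsto_coe.2 ((hF.tendsto _).comp hω)

end DominatedConvergence

section ZerothCurvatureMeasure

variable {m : ℕ} (K : ConvexBody (Euc (m + 1)))

lemma curv0_succ (K : Set (Euc (m + 1))) :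
    curv0 (m + 1) K = Measure.map (gaussMapInv K) (μH[m].restrict (sphere 0 1)) := by
  simp [curv0]

lemma ae_mem_unit_sphere : ∀ᵐ u ∂μH[m].restrict (sphere (0 : Euc (m + 1)) 1), ‖u‖ = 1 := by
  filter_upwards [ae_restrict_mem isClosed_sphere.measurableSet] with u hu
  simpa using hu

lemma aemeasurable_gaussMapInv :
    AEMeasurable (gaussMapInv (K : Set (Euc (m + 1)))) (μH[m].restrict (sphere 0 1)) := by
  let S := {u ∈ sphere (0 : Euc (m + 1)) 1 | {x | IsOuterNormalAt K u x}.Subsingleton}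
  have hS : S =ᵐ[μH[m]] sphere (0 : Euc (m + 1)) 1 := by
    have hae := (ae_restrict_iff' isClosed_sphere.measurableSet).1
      (ae_subsingleton_setOf_supportPoint K)
    filter_upwards [hae] with u hu
    exact propext ⟨fun h => h.1, fun h => ⟨h, hu h⟩⟩
  have hcont : ContinuousOn (gaussMapInv (K : Set (Euc (m + 1)))) S := fun u hu =>
    tendsto_gaussMapInv tendsto_const_nhds (tendsto_id.mono_left nhdsWithin_le_nhds)
      (eventually_nhdsWithin_of_forall fun v hv => by simpa using hv.1) hu.2
  rw [← Measure.restrict_congr_set hS]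
  exact hcont.aemeasurable₀ (isClosed_sphere.measurableSet.nullMeasurableSet.congr hS.symm)

lemma lintegral_curv0 {f : Euc (m + 1) → ℝ≥0∞} (hf : Measurable f) :
    ∫⁻ x, f x ∂curv0 (m + 1) K = ∫⁻ u in sphere 0 1, f (gaussMapInv K u) ∂μH[m] := by
  rw [curv0_succ, lintegral_map' hf.aemeasurable (aemeasurable_gaussMapInv K)]

lemma ae_mem_frontier_curv0 : ∀ᵐ x ∂curv0 (m + 1) K, x ∈ frontier (K : Set (Euc (m + 1))) := by
  rw [curv0_succ]
  refine (ae_map_iff (p := (· ∈ frontier (K : Set (Euc (m + 1))))) (aemeasurable_gaussMapInv K)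
    isClosed_frontier.measurableSet).2 ?_
  filter_upwards [ae_mem_unit_sphere] with u hu
  exact (gaussMapInv_spec K (ne_zero_of_norm_eq_one hu)).1

instance isFiniteMeasure_restrict_unit_sphere :
    IsFiniteMeasure (μH[m].restrict (sphere (0 : Euc (m + 1)) 1)) :=
  isFiniteMeasure_restrict.2 (hausdorffMeasure_sphere_lt_top m).ne

variable {F : Euc (m + 1) → ℝ≥0}

lemma lintegral_curv0_lt_top (hF : Continuous F) : ∫⁻ x, F x ∂curv0 (m + 1) K < ∞ := by
  rw [lintegral_curv0 K hF.measurable.coe_nnreal_ennreal]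
  refine lintegral_comp_lt_top K.isCompact hF ?_
  filter_upwards [ae_mem_unit_sphere] with u hu
  exact gaussMapInv_mem K (ne_zero_of_norm_eq_one hu)

theorem tendsto_lintegral_curv0 {K : ConvexBody (Euc (m + 1))} {ι : Type*} {l : Filter ι}
    [l.IsCountablyGenerated] {L : ι → ConvexBody (Euc (m + 1))} (hL : Tendsto L l (𝓝 K))
    (hF : Continuous F) :
    Tendsto (fun i => ∫⁻ x, F x ∂curv0 (m + 1) (L i)) l (𝓝 (∫⁻ x, F x ∂curv0 (m + 1) K)) := by
  simp only [lintegral_curv0 _ hF.measurable.coe_nnreal_ennreal]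
  obtain ⟨R, hR⟩ := exists_eventually_subset_closedBall K
  refine tendsto_lintegral_comp (isCompact_closedBall 0 R) hF
    (Eventually.of_forall fun i => aemeasurable_gaussMapInv (L i)) ?_ ?_
  · filter_upwards [hL.eventually hR] with i hi
    filter_upwards [ae_mem_unit_sphere] with u hu
    exact hi (gaussMapInv_mem _ (ne_zero_of_norm_eq_one hu))
  · filter_upwards [ae_mem_unit_sphere, ae_subsingleton_setOf_supportPoint K] with u hu huniq
    exact tendsto_gaussMapInv hL tendsto_const_nhds (Eventually.of_forall fun _ => hu) huniq

end ZerothCurvatureMeasure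

section NearestPoint

variable {E : Type*} [NormedAddCommGroup E] [InnerProductSpace ℝ E] (K : ConvexBody E)

lemma exists_mem_forall_inner_sub_le_zero (z : E) : ∃ x ∈ K, ∀ y ∈ K, ⟪z - x, y - x⟫ ≤ 0 := by
  obtain ⟨x, hx, hmin⟩ :=
    exists_norm_eq_iInf_of_complete_convex K.nonempty K.isCompact.isComplete K.convex z
  exact ⟨x, hx, (norm_eq_iInf_iff_real_inner_le_zero K.convex hx).1 hmin⟩

/-- The metric projection onto a convex body, encoded by its variational inequality. -/
def nearestPt (z : E) : E := (exists_mem_forall_inner_sub_le_zero K z).choose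

lemma nearestPt_mem (z : E) : nearestPt K z ∈ K :=
  (exists_mem_forall_inner_sub_le_zero K z).choose_spec.1

lemma inner_sub_nearestPt_le_zero (z : E) {y : E} (hy : y ∈ K) :
    ⟪z - nearestPt K z, y - nearestPt K z⟫ ≤ 0 :=
  (exists_mem_forall_inner_sub_le_zero K z).choose_spec.2 y hy

lemma norm_sub_le_of_inner_sub_le_zero {a b x y : E} (hx : ⟪a - x, y - x⟫ ≤ 0)
    (hy : ⟪b - y, x - y⟫ ≤ 0) : ‖x - y‖ ≤ ‖a - b‖ := by
  have hsq : ‖x - y‖ * ‖x - y‖ ≤ ‖a - b‖ * ‖x - y‖ :=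
    calc ‖x - y‖ * ‖x - y‖ = ⟪x - y, x - y⟫ := (real_inner_self_eq_norm_mul_norm _).symm
      _ = ⟪a - b, x - y⟫ + ⟪a - x, y - x⟫ + ⟪b - y, x - y⟫ := by
        rw [← neg_sub x y, inner_neg_right, ← sub_eq_add_neg, ← inner_sub_left, ← inner_add_left]
        congr 1
        abel
      _ ≤ ⟪a - b, x - y⟫ := by linarith
      _ ≤ ‖a - b‖ * ‖x - y‖ := real_inner_le_norm _ _
  rcases (norm_nonneg (x - y)).eq_or_lt with h | h
  · exact h ▸ norm_nonneg _
  · exact le_of_mul_le_mul_right hsq h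

lemma lipschitzWith_nearestPt : LipschitzWith 1 (nearestPt K) :=
  LipschitzWith.mk_one fun a b => by
    rw [dist_eq_norm, dist_eq_norm]
    exact norm_sub_le_of_inner_sub_le_zero (inner_sub_nearestPt_le_zero K a (nearestPt_mem K b))
      (inner_sub_nearestPt_le_zero K b (nearestPt_mem K a))

variable {K}

lemma nearestPt_eq_of_inner_sub_le_zero {x z : E} (hx : x ∈ K) (h : ∀ y ∈ K, ⟪z - x, y - x⟫ ≤ 0) :
    nearestPt K z = x := by
  have hle := norm_sub_le_of_inner_sub_le_zero (inner_sub_nearestPt_le_zero K z hx)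
    (h _ (nearestPt_mem K z))
  simpa [sub_eq_zero] using hle

lemma nearestPt_eq_self {x : E} (hx : x ∈ K) : nearestPt K x = x :=
  nearestPt_eq_of_inner_sub_le_zero hx fun y _ => by simp

lemma dist_nearestPt_le {L : ConvexBody E} {x : E} (hx : x ∈ K) (z : E) :
    dist (nearestPt L z) x ≤ dist z x + 2 * dist K L := by
  obtain ⟨y, hy, hxy⟩ := exists_mem_dist_le_dist_convexBody (K := L) hx
  have hproj : dist (nearestPt L z) y ≤ dist z y := by
    simpa [nearestPt_eq_self hy] using (lipschitzWith_nearestPt L).dist_le_mul z y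
  linarith [dist_triangle_right (nearestPt L z) x y, dist_triangle z x y]

end NearestPoint

section BoundaryComparison

lemma restrict_hausdorffMeasure_le_smul_map {X Y : Type*} [EMetricSpace X] [EMetricSpace Y]
    [MeasurableSpace X] [BorelSpace X] [MeasurableSpace Y] [BorelSpace Y] {f : X → Y} {C : ℝ≥0}
    (hf : LipschitzWith C f) {d : ℝ} (hd : 0 ≤ d) {s : Set Y} {t : Set X} (hst : s ⊆ f '' t) :
    μH[d].restrict s ≤ (C : ℝ≥0∞) ^ d • Measure.map f (μH[d].restrict t) := by
  refine Measure.le_iff.2 fun A hA => ?_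
  have hfA := hf.continuous.measurable hA
  rw [Measure.smul_apply, Measure.map_apply hf.continuous.measurable hA, Measure.restrict_apply hA,
    Measure.restrict_apply hfA, smul_eq_mul]
  have hsub : A ∩ s ⊆ f '' (f ⁻¹' A ∩ t) := by
    rintro _ ⟨hA', hs⟩
    obtain ⟨x, hx, rfl⟩ := hst hs
    exact ⟨x, ⟨hA', hx⟩, rfl⟩
  exact (measure_mono hsub).trans (hf.hausdorffMeasure_image_le hd _)

lemma exists_add_smul_mem_frontier_s12 {E : Type*} [NormedAddCommGroup E] [NormedSpace ℝ E] {K : Set E}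
    (hK : Bornology.IsBounded K) {a v : E} (ha : a ∈ K) (hv : v ≠ 0) :
    ∃ t : ℝ, 0 ≤ t ∧ a + t • v ∈ frontier K := by
  have hnorm : Tendsto (fun t : ℝ => ‖a + t • v‖) atTop atTop := by
    have hle : ∀ t : ℝ, t * ‖v‖ - ‖a‖ ≤ ‖a + t • v‖ := fun t => by
      have htv : t * ‖v‖ ≤ ‖t • v‖ := by
        rw [norm_smul]
        gcongr
        exact le_abs_self t
      have hsub := norm_sub_le (a + t • v) a
      rw [add_sub_cancel_left] at hsub
      linarith
    refine tendsto_atTop_mono hle (tendsto_atTop_add_const_right _ _ ?_)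
    exact tendsto_id.atTop_mul_const (norm_pos_iff.2 hv)
  have hleave : ∀ᶠ t : ℝ in atTop, a + t • v ∉ K :=
    (tendsto_norm_atTop_iff_cobounded.1 hnorm) (Bornology.isBounded_def.1 hK)
  obtain ⟨T, hT, hTK⟩ := ((eventually_ge_atTop 0).and hleave).exists
  have hray : Continuous fun t : ℝ≥0 => a + (t : ℝ) • v := by fun_prop
  have hfr : (frontier ((fun t : ℝ≥0 => a + (t : ℝ) • v) ⁻¹' K)).Nonempty :=
    nonempty_frontier_iff.2
      ⟨⟨0, by simpa using ha⟩, (ne_univ_iff_exists_notMem _).2 ⟨⟨T, hT⟩, hTK⟩⟩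
  obtain ⟨t, ht⟩ := hfr
  exact ⟨t, t.2, hray.frontier_preimage_subset K ht⟩

lemma inv_one_add_smul_mem_interior {V : Type*} [NormedAddCommGroup V] [NormedSpace ℝ V]
    {K L : ConvexBody V} {r ε : ℝ} (hr : 0 < r) (hrK : ball 0 r ⊆ (K : Set V))
    (hε : dist L K < ε * r) {x : V} (hx : x ∈ L) : (1 + ε)⁻¹ • x ∈ interior (K : Set V) := by
  have hε0 : 0 < ε := pos_of_mul_pos_left (dist_nonneg.trans_lt hε) hr.le
  obtain ⟨y, hy, hxy⟩ := exists_mem_dist_le_dist_convexBody (K := K) hx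
  have hball : ε⁻¹ • (x - y) ∈ ball (0 : V) r := by
    rw [mem_ball_zero_iff, norm_smul, norm_inv, Real.norm_of_nonneg hε0.le, inv_mul_lt_iff₀ hε0,
      ← dist_eq_norm]
    exact hxy.trans_lt hε
  have hcombo := K.convex.combo_self_interior_mem_interior hy
    (interior_maximal hrK isOpen_ball hball) (a := (1 + ε)⁻¹) (b := (1 + ε)⁻¹ * ε) (by positivity)
    (by positivity) (by field_simp)
  rwa [mul_smul, smul_inv_smul₀ hε0.ne', ← smul_add, add_sub_cancel] at hcombo

variable {n : ℕ} {L : ConvexBody (Euc n)}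

/-- The unit vector pointing from the nearest point of `K` towards `z`; it is zero for `z ∈ K`. -/
def nearestPtNormal {E : Type*} [NormedAddCommGroup E] [InnerProductSpace ℝ E] (K : ConvexBody E)
    (z : E) : E :=
  ‖z - nearestPt K z‖⁻¹ • (z - nearestPt K z)

lemma nearestPtNormal_spec {z : Euc n} (hz : z ∉ L) :
    ‖nearestPtNormal L z‖ = 1 ∧ IsOuterNormalAt L (nearestPtNormal L z) (nearestPt L z) := by
  have hne : z - nearestPt L z ≠ 0 := fun h => hz (sub_eq_zero.1 h ▸ nearestPt_mem L z)
  have hunit : ‖nearestPtNormal L z‖ = 1 := norm_smul_inv_norm hne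
  have hmax : ∀ y ∈ (L : Set (Euc n)),
      ⟪y, nearestPtNormal L z⟫ ≤ ⟪nearestPt L z, nearestPtNormal L z⟫ := by
    intro y hy
    rw [← sub_nonpos, ← inner_sub_left, nearestPtNormal, real_inner_smul_right, real_inner_comm]
    exact mul_nonpos_of_nonneg_of_nonpos (by positivity) (inner_sub_nearestPt_le_zero L z hy)
  exact ⟨hunit, mem_frontier_of_forall_inner_le (ne_zero_of_norm_eq_one hunit) (nearestPt_mem L z)
    hmax, hmax⟩

lemma nearestPt_add_smul {u x : Euc n} (h : IsOuterNormalAt L u x) {t : ℝ} (ht : 0 ≤ t) :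
    nearestPt L (x + t • u) = x := by
  refine nearestPt_eq_of_inner_sub_le_zero (L.isClosed.frontier_subset h.1) fun y hy => ?_
  rw [add_sub_cancel_left, real_inner_smul_left, real_inner_comm, inner_sub_left]
  exact mul_nonpos_of_nonneg_of_nonpos ht (sub_nonpos.2 (h.2 y hy))

lemma frontier_subset_image_nearestPt (hint : (interior (L : Set (Euc n))).Nonempty)
    {K : Set (Euc n)} (hK : Bornology.IsBounded K) {c : ℝ} (hc : c ≠ 0)
    (hLK : ∀ x ∈ L, c⁻¹ • x ∈ K) :
    frontier (L : Set (Euc n)) ⊆ (fun y => nearestPt L (c • y)) '' frontier K := by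
  intro x hx
  obtain ⟨u, hu, hux⟩ := exists_norm_eq_one_and_isOuterNormalAt L.convex hint hx
  obtain ⟨t, ht, hy⟩ := exists_add_smul_mem_frontier_s12 hK (hLK x (L.isClosed.frontier_subset hx))
    (smul_ne_zero (inv_ne_zero hc) (ne_zero_of_norm_eq_one hu))
  refine ⟨_, hy, ?_⟩
  simp only [smul_add, smul_comm t, smul_inv_smul₀ hc]
  exact nearestPt_add_smul hux ht

variable {m : ℕ}

lemma bdryMeasure_succ (K : Set (Euc (m + 1))) :
    bdryMeasure (m + 1) K = μH[m].restrict (frontier K) := by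
  simp [bdryMeasure]

lemma bdryMeasure_le_smul_map {K : Set (Euc (m + 1))} (hK : Bornology.IsBounded K)
    {L : ConvexBody (Euc (m + 1))} (hint : (interior (L : Set (Euc (m + 1)))).Nonempty)
    {c : ℝ} (hc : c ≠ 0) (hLK : ∀ x ∈ L, c⁻¹ • x ∈ K) :
    bdryMeasure (m + 1) L ≤
      ‖c‖ₑ ^ m • Measure.map (fun y => nearestPt L (c • y)) (bdryMeasure (m + 1) K) := by
  have hlip := (lipschitzWith_nearestPt L).comp (lipschitzWith_smul c)
  have hle := restrict_hausdorffMeasure_le_smul_map hlip m.cast_nonneg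
    (frontier_subset_image_nearestPt hint hK hc hLK)
  rw [one_mul, ENNReal.rpow_natCast] at hle
  rw [bdryMeasure_succ, bdryMeasure_succ]
  exact hle

/-- Bounding the left side through `nearestPtNormal`, which agrees with the pulled-back Gauss map
only over regular points of `L`, avoids any measurability of the Gauss map. -/
lemma lintegral_bdryMeasure_le {K L : ConvexBody (Euc (m + 1))}
    (h0 : (L : Set (Euc (m + 1))) ∈ 𝓝 0) {c : ℝ} (hc : c ≠ 0)
    (hLK : ∀ x ∈ L, c⁻¹ • x ∈ interior (K : Set (Euc (m + 1))))
    (F : Euc (m + 1) × Euc (m + 1) → ℝ≥0∞) :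
    ∫⁻ x, F (x, gaussMap L x) ∂bdryMeasure (m + 1) L ≤
      ‖c‖ₑ ^ m *
        ∫⁻ y, F (nearestPt L (c • y), nearestPtNormal L (c • y)) ∂bdryMeasure (m + 1) K := by
  have hint : (interior (L : Set (Euc (m + 1)))).Nonempty := ⟨0, mem_interior_iff_mem_nhds.2 h0⟩
  let regular : Set (Euc (m + 1)) := {x | {u | ‖u‖ = 1 ∧ IsOuterNormalAt L u x}.Subsingleton}
  let H : Euc (m + 1) → ℝ≥0∞ := regular.indicator fun x => F (x, gaussMap L x)
  have hH : ∀ᵐ x ∂bdryMeasure (m + 1) (L : Set (Euc (m + 1))), H x = F (x, gaussMap L x) := by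
    rw [bdryMeasure_succ]
    filter_upwards [ae_subsingleton_setOf_normal h0] with x hx
    exact indicator_of_mem (s := regular) hx _
  have hpull : ∀ᵐ y ∂bdryMeasure (m + 1) (K : Set (Euc (m + 1))),
      H (nearestPt L (c • y)) ≤ F (nearestPt L (c • y), nearestPtNormal L (c • y)) := by
    rw [bdryMeasure_succ]
    filter_upwards [ae_restrict_mem isClosed_frontier.measurableSet] with y hy
    have hout : c • y ∉ L := fun hmem =>
      hy.2 (by simpa only [inv_smul_smul₀ hc] using hLK _ hmem)
    have hnormal := nearestPtNormal_spec hout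
    by_cases hreg : nearestPt L (c • y) ∈ regular
    · exact (indicator_of_mem hreg _).trans_le
        (by rw [hreg (gaussMap_spec L.convex hint hnormal.2.1) hnormal])
    · exact (indicator_of_notMem hreg _).trans_le zero_le
  calc ∫⁻ x, F (x, gaussMap L x) ∂bdryMeasure (m + 1) L
      = ∫⁻ x, H x ∂bdryMeasure (m + 1) L := (lintegral_congr_ae hH).symm
    _ ≤ ∫⁻ x, H x ∂(‖c‖ₑ ^ m • Measure.map (fun y => nearestPt L (c • y))
          (bdryMeasure (m + 1) K)) :=
        lintegral_mono' (bdryMeasure_le_smul_map K.isBounded hint hc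
          fun x hx => interior_subset (hLK x hx)) le_rfl
    _ ≤ ‖c‖ₑ ^ m * ∫⁻ y, H (nearestPt L (c • y)) ∂bdryMeasure (m + 1) K := by
        rw [lintegral_smul_measure, smul_eq_mul]
        exact mul_le_mul' le_rfl (lintegral_map_le _ _)
    _ ≤ _ := mul_le_mul' le_rfl (lintegral_mono_ae hpull)

end BoundaryComparison

section BoundaryMeasure

variable {m : ℕ} {K : ConvexBody (Euc (m + 1))} {F : Euc (m + 1) × Euc (m + 1) → ℝ≥0}

lemma ae_mem_frontier_bdryMeasure (K : ConvexBody (Euc (m + 1))) :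
    ∀ᵐ x ∂bdryMeasure (m + 1) K, x ∈ frontier (K : Set (Euc (m + 1))) :=
  ae_restrict_mem isClosed_frontier.measurableSet

lemma isFiniteMeasure_bdryMeasure_s12 (h0 : (K : Set (Euc (m + 1))) ∈ 𝓝 0) :
    IsFiniteMeasure (bdryMeasure (m + 1) (K : Set (Euc (m + 1)))) := by
  rw [bdryMeasure_succ]
  exact isFiniteMeasure_restrict.2 (hausdorffMeasure_frontier_lt_top K.convex h0 K.isBounded).ne

lemma lintegral_bdryMeasure_lt_top (h0 : (K : Set (Euc (m + 1))) ∈ 𝓝 0) (hF : Continuous F) :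
    ∫⁻ x, F (x, gaussMap K x) ∂bdryMeasure (m + 1) K < ∞ := by
  have := isFiniteMeasure_bdryMeasure_s12 h0
  refine lintegral_comp_lt_top (K.isCompact.prod (isCompact_sphere 0 1)) hF ?_
  filter_upwards [ae_mem_frontier_bdryMeasure K] with x hx
  have hunit := (gaussMap_spec K.convex ⟨0, mem_interior_iff_mem_nhds.2 h0⟩ hx).1
  exact ⟨K.isClosed.frontier_subset hx, mem_sphere_zero_iff_norm.2 hunit⟩

lemma tendsto_nearestPt_smul {E ι : Type*} [NormedAddCommGroup E] [InnerProductSpace ℝ E]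
    {K : ConvexBody E} {l : Filter ι} {L : ι → ConvexBody E} {c : ι → ℝ} (hL : Tendsto L l (𝓝 K))
    (hc : Tendsto c l (𝓝 1)) {y : E} (hy : y ∈ K) :
    Tendsto (fun i => nearestPt (L i) (c i • y)) l (𝓝 y) := by
  have hcy : Tendsto (fun i => dist (c i • y) y) l (𝓝 0) := by
    simpa using (hc.smul_const y).dist (tendsto_const_nhds (x := y))
  have hLK : Tendsto (fun i => dist K (L i)) l (𝓝 0) := by
    simpa using (tendsto_const_nhds (x := K)).dist hL
  refine tendsto_iff_dist_tendsto_zero.2 (squeeze_zero (fun _ => dist_nonneg)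
    (fun i => dist_nearestPt_le hy _) ?_)
  simpa using hcy.add (hLK.const_mul 2)

lemma tendsto_lintegral_nearestPt_smul (h0 : (K : Set (Euc (m + 1))) ∈ 𝓝 0) {ι : Type*}
    {l : Filter ι} [l.IsCountablyGenerated] {L : ι → ConvexBody (Euc (m + 1))} {c : ι → ℝ}
    (hL : Tendsto L l (𝓝 K)) (hc : Tendsto c l (𝓝 1))
    (hLK : ∀ᶠ i in l, ∀ x ∈ L i, (c i)⁻¹ • x ∈ interior (K : Set (Euc (m + 1))))
    (hF : Continuous F) :
    Tendsto (fun i => ∫⁻ y, F (nearestPt (L i) (c i • y), nearestPtNormal (L i) (c i • y))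
      ∂bdryMeasure (m + 1) K) l (𝓝 (∫⁻ y, F (y, gaussMap K y) ∂bdryMeasure (m + 1) K)) := by
  have := isFiniteMeasure_bdryMeasure_s12 h0
  have hnormal : ∀ᶠ i in l, ∀ y ∈ frontier (K : Set (Euc (m + 1))),
      ‖nearestPtNormal (L i) (c i • y)‖ = 1 ∧
        IsOuterNormalAt (L i) (nearestPtNormal (L i) (c i • y)) (nearestPt (L i) (c i • y)) := by
    filter_upwards [hLK, hc.eventually_ne one_ne_zero] with i hi hci y hy
    exact nearestPtNormal_spec fun hmem =>
      hy.2 (by simpa only [inv_smul_smul₀ hci] using hi _ hmem)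
  obtain ⟨R, hR⟩ := exists_eventually_subset_closedBall K
  refine tendsto_lintegral_comp ((isCompact_closedBall 0 R).prod (isCompact_sphere 0 1)) hF
    (Eventually.of_forall fun i => ?_) ?_ ?_
  · have hcont : Continuous fun y => nearestPt (L i) (c i • y) :=
      (lipschitzWith_nearestPt (L i)).continuous.comp (continuous_const_smul (c i))
    have hmeas := hcont.measurable
    unfold nearestPtNormal
    fun_prop
  · filter_upwards [hL.eventually hR, hnormal] with i hLR hi
    filter_upwards [ae_mem_frontier_bdryMeasure K] with y hy
    exact ⟨hLR (nearestPt_mem _ _), mem_sphere_zero_iff_norm.2 (hi y hy).1⟩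
  · have hreg := ae_subsingleton_setOf_normal h0
    rw [← bdryMeasure_succ] at hreg
    filter_upwards [ae_mem_frontier_bdryMeasure K, hreg] with y hy huniq
    have hpt := tendsto_nearestPt_smul hL hc (K.isClosed.frontier_subset hy)
    exact hpt.prodMk_nhds (tendsto_outerNormal ⟨0, mem_interior_iff_mem_nhds.2 h0⟩ hL hpt
      (hnormal.mono fun i hi => hi y hy) huniq)

theorem limsup_lintegral_bdryMeasure_le (h0 : (K : Set (Euc (m + 1))) ∈ 𝓝 0)
    {L : ℕ → ConvexBody (Euc (m + 1))} (hL : Tendsto L atTop (𝓝 K))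
    (h0L : ∀ j, (L j : Set (Euc (m + 1))) ∈ 𝓝 0) (hF : Continuous F) :
    limsup (fun j => ∫⁻ x, F (x, gaussMap (L j) x) ∂bdryMeasure (m + 1) (L j)) atTop ≤
      ∫⁻ x, F (x, gaussMap K x) ∂bdryMeasure (m + 1) K := by
  obtain ⟨r, hr, hrK⟩ := Metric.mem_nhds_iff.1 h0
  let c : ℕ → ℝ := fun j => 1 + (dist (L j) K / r + 1 / ((j : ℝ) + 1))
  have hc : Tendsto c atTop (𝓝 1) := by
    have hdist := (tendsto_iff_dist_tendsto_zero.1 hL).div_const r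
    simpa only [zero_div, add_zero] using
      (hdist.add tendsto_one_div_add_atTop_nhds_zero_nat).const_add 1
  have hc0 : ∀ j, c j ≠ 0 := fun j => by positivity
  have hLK : ∀ j, ∀ x ∈ L j, (c j)⁻¹ • x ∈ interior (K : Set (Euc (m + 1))) := fun j x hx => by
    refine inv_one_add_smul_mem_interior hr hrK ?_ hx
    rw [add_mul, div_mul_cancel₀ _ hr.ne']
    exact lt_add_of_pos_right _ (by positivity)
  have hscale : Tendsto (fun j => ‖c j‖ₑ ^ m) atTop (𝓝 1) := by
    simpa using ENNReal.Tendsto.pow (n := m) hc.enorm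
  have hlim := ENNReal.Tendsto.mul hscale (Or.inl one_ne_zero)
    (tendsto_lintegral_nearestPt_smul h0 hL hc (Eventually.of_forall hLK) hF)
    (Or.inr ENNReal.one_ne_top)
  rw [one_mul] at hlim
  rw [← hlim.limsup_eq]
  exact limsup_le_limsup (Eventually.of_forall fun j =>
    lintegral_bdryMeasure_le (h0L j) (hc0 j) (hLK j) fun a => F a)

end BoundaryMeasure

section LpFunctional

/-- The functional whose infimum over positive continuous `g` is the `L_p` affine surface area. -/
def lpFunctional (n : ℕ) (p : ℝ) (g : Euc n → ℝ) (K : Set (Euc n)) : ℝ≥0∞ :=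
  (∫⁻ x, ENNReal.ofReal (g x) ^ (-(n : ℝ)) ∂curv0 n K) ^ (p / (n + p)) *
    (∫⁻ x, ENNReal.ofReal (g x) ^ p * ENNReal.ofReal (suppFn K (gaussMap K x)) ^ (1 - p)
      ∂bdryMeasure n K) ^ ((n : ℝ) / (n + p))

lemma exists_continuousMap_pos_eqOn {X : Type*} [TopologicalSpace X] [NormalSpace X] {s : Set X}
    (hs : IsClosed s) {g : X → ℝ} (hg : ContinuousOn g s) (hpos : ∀ x ∈ s, 0 < g x) :
    ∃ G : C(X, ℝ), (∀ x, 0 < G x) ∧ EqOn G g s := by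
  have hlog : Continuous (s.domRestrict fun x => Real.log (g x)) :=
    continuousOn_iff_continuous_domRestrict.1 (hg.log fun x hx => (hpos x hx).ne')
  obtain ⟨φ, hφ⟩ := ContinuousMap.exists_restrict_eq hs ⟨_, hlog⟩
  refine ⟨⟨fun x => Real.exp (φ x), by fun_prop⟩, fun x => Real.exp_pos _, fun x hx => ?_⟩
  have hφx : φ x = Real.log (g x) := DFunLike.congr_fun hφ ⟨x, hx⟩
  simp only [ContinuousMap.coe_mk, hφx, Real.exp_log (hpos x hx)]

lemma limsup_rpow_mul_rpow_le {ι : Type*} {l : Filter ι} {u v : ι → ℝ≥0∞} {a b : ℝ≥0∞}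
    (hu : limsup u l ≤ a) (hv : limsup v l ≤ b) (ha : a ≠ ∞) (hb : b ≠ ∞) {s t : ℝ} (hs : 0 < s)
    (ht : 0 < t) : limsup (fun i => u i ^ s * v i ^ t) l ≤ a ^ s * b ^ t := by
  have hlimsup {w : ι → ℝ≥0∞} {c : ℝ≥0∞} (hw : limsup w l ≤ c) {q : ℝ} (hq : 0 < q) :
      limsup (fun i => w i ^ q) l ≤ c ^ q :=
    ((ENNReal.orderIsoRpow q hq).limsup_apply (u := w)).symm.trans_le
      (ENNReal.rpow_le_rpow hw hq.le)
  have hfin {w : ι → ℝ≥0∞} {c : ℝ≥0∞} (hw : limsup w l ≤ c) (hc : c ≠ ∞) {q : ℝ} (hq : 0 < q) :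
      limsup (fun i => w i ^ q) l ≠ ∞ :=
    ne_top_of_le_ne_top (ENNReal.rpow_ne_top_of_nonneg hq.le hc) (hlimsup hw hq)
  exact (ENNReal.limsup_mul_le' (Or.inr (hfin hv hb ht)) (Or.inl (hfin hu ha hs))).trans
    (mul_le_mul' (hlimsup hu hs) (hlimsup hv ht))

lemma continuous_toNNReal_rpow {X : Type*} [TopologicalSpace X] {f : X → ℝ} (hf : Continuous f)
    (hpos : ∀ x, 0 < f x) (q : ℝ) : Continuous fun x => (f x).toNNReal ^ q :=
  continuous_iff_continuousAt.2 fun x =>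
    (NNReal.continuousAt_rpow_const (Or.inl (Real.toNNReal_pos.2 (hpos x)).ne')).tendsto.comp
      (tendsto_real_toNNReal (hf.tendsto x))

lemma coe_toNNReal_rpow {a : ℝ} (ha : 0 < a) (q : ℝ) :
    ((a.toNNReal ^ q : ℝ≥0) : ℝ≥0∞) = ENNReal.ofReal a ^ q :=
  ENNReal.coe_rpow_of_ne_zero (Real.toNNReal_pos.2 ha).ne' q

variable {m : ℕ} {p : ℝ} {K : ConvexBody (Euc (m + 1))} {G : Euc (m + 1) → ℝ}

lemma lpFunctional_congr {g : Euc (m + 1) → ℝ} (h : EqOn g G (frontier K)) :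
    lpFunctional (m + 1) p g K = lpFunctional (m + 1) p G K := by
  unfold lpFunctional
  congr 2
  · refine lintegral_congr_ae ?_
    filter_upwards [ae_mem_frontier_curv0 K] with x hx
    rw [h hx]
  · refine lintegral_congr_ae ?_
    filter_upwards [ae_mem_frontier_bdryMeasure K] with x hx
    rw [h hx]

lemma lpASA_eq_iInf (p : ℝ) (K : ConvexBody (Euc (m + 1))) :
    lpASA (m + 1) p K = ⨅ G : {G : C(Euc (m + 1), ℝ) // ∀ x, 0 < G x},
      lpFunctional (m + 1) p G.1 K := by
  refine le_antisymm (le_iInf fun G => sInf_le ?_) (le_sInf ?_)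
  · exact ⟨G.1, G.1.continuous.continuousOn, fun x _ => G.2 x, rfl⟩
  · rintro v ⟨g, hg, hpos, rfl⟩
    obtain ⟨G, hG, hGg⟩ := exists_continuousMap_pos_eqOn isClosed_frontier hg hpos
    exact (iInf_le _ ⟨G, hG⟩).trans_eq (lpFunctional_congr hGg)

/-- On `∂L` one has `h_L(ν_L(x)) = ⟪x, ν_L(x)⟫`; truncating this inner product from below at the
inradius of the bodies near `K` makes its powers continuous in `(x, u)`. -/
lemma exists_continuous_eventually_integrand_eq (h0 : (K : Set (Euc (m + 1))) ∈ 𝓝 0)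
    (hG : Continuous G) (hpos : ∀ x, 0 < G x) (p q : ℝ) :
    ∃ F : Euc (m + 1) × Euc (m + 1) → ℝ≥0, Continuous F ∧ ∀ᶠ L : ConvexBody (Euc (m + 1)) in 𝓝 K,
      (L : Set (Euc (m + 1))) ∈ 𝓝 0 → ∀ x ∈ frontier (L : Set (Euc (m + 1))),
        ENNReal.ofReal (G x) ^ p * ENNReal.ofReal (suppFn L (gaussMap L x)) ^ q =
          F (x, gaussMap L x) := by
  obtain ⟨r, hr, hrL⟩ := exists_pos_eventually_le_suppFn K h0
  have hmax : ∀ a : Euc (m + 1) × Euc (m + 1), 0 < max ⟪a.1, a.2⟫ r := fun a =>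
    lt_max_of_lt_right hr
  refine ⟨fun a => (G a.1).toNNReal ^ p * (max ⟪a.1, a.2⟫ r).toNNReal ^ q, ?_, ?_⟩
  · exact (continuous_toNNReal_rpow (hG.comp continuous_fst) (fun a => hpos a.1) p).mul
      (continuous_toNNReal_rpow (by fun_prop) hmax q)
  · filter_upwards [hrL] with L hL h0L x hx
    obtain ⟨hunit, hnormal⟩ := gaussMap_spec L.convex ⟨0, mem_interior_iff_mem_nhds.2 h0L⟩ hx
    have hsupp := hnormal.suppFn_eq L.isClosed
    rw [ENNReal.coe_mul, coe_toNNReal_rpow (hpos x), coe_toNNReal_rpow (hmax (x, gaussMap L x)),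
      max_eq_left (hsupp ▸ hL _ hunit), hsupp]

lemma lintegral_rpow_curv0_lt_top (K : ConvexBody (Euc (m + 1))) (hG : Continuous G)
    (hpos : ∀ x, 0 < G x) (q : ℝ) : ∫⁻ x, ENNReal.ofReal (G x) ^ q ∂curv0 (m + 1) K < ∞ := by
  simpa only [coe_toNNReal_rpow (hpos _)] using
    lintegral_curv0_lt_top K (continuous_toNNReal_rpow hG hpos q)

lemma lintegral_rpow_mul_suppFn_rpow_lt_top (h0 : (K : Set (Euc (m + 1))) ∈ 𝓝 0)
    (hG : Continuous G) (hpos : ∀ x, 0 < G x) (p q : ℝ) :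
    ∫⁻ x, ENNReal.ofReal (G x) ^ p * ENNReal.ofReal (suppFn K (gaussMap K x)) ^ q
      ∂bdryMeasure (m + 1) K < ∞ := by
  obtain ⟨F, hF, hFeq⟩ := exists_continuous_eventually_integrand_eq h0 hG hpos p q
  rw [lintegral_congr_ae ((ae_mem_frontier_bdryMeasure K).mono (hFeq.self_of_nhds h0))]
  exact lintegral_bdryMeasure_lt_top h0 hF

variable {L : ℕ → ConvexBody (Euc (m + 1))}

lemma tendsto_lintegral_rpow_curv0 (hL : Tendsto L atTop (𝓝 K)) (hG : Continuous G)
    (hpos : ∀ x, 0 < G x) (q : ℝ) :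
    Tendsto (fun j => ∫⁻ x, ENNReal.ofReal (G x) ^ q ∂curv0 (m + 1) (L j)) atTop
      (𝓝 (∫⁻ x, ENNReal.ofReal (G x) ^ q ∂curv0 (m + 1) K)) := by
  simpa only [coe_toNNReal_rpow (hpos _)] using
    tendsto_lintegral_curv0 hL (continuous_toNNReal_rpow hG hpos q)

lemma limsup_lintegral_rpow_mul_suppFn_rpow_le (h0 : (K : Set (Euc (m + 1))) ∈ 𝓝 0)
    (hL : Tendsto L atTop (𝓝 K)) (h0L : ∀ j, (L j : Set (Euc (m + 1))) ∈ 𝓝 0) (hG : Continuous G)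
    (hpos : ∀ x, 0 < G x) (p q : ℝ) :
    limsup (fun j => ∫⁻ x, ENNReal.ofReal (G x) ^ p *
        ENNReal.ofReal (suppFn (L j) (gaussMap (L j) x)) ^ q ∂bdryMeasure (m + 1) (L j)) atTop ≤
      ∫⁻ x, ENNReal.ofReal (G x) ^ p * ENNReal.ofReal (suppFn K (gaussMap K x)) ^ q
        ∂bdryMeasure (m + 1) K := by
  obtain ⟨F, hF, hFeq⟩ := exists_continuous_eventually_integrand_eq h0 hG hpos p q
  have hcongr : ∀ᶠ j in atTop, ∫⁻ x, ENNReal.ofReal (G x) ^ p *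
        ENNReal.ofReal (suppFn (L j) (gaussMap (L j) x)) ^ q ∂bdryMeasure (m + 1) (L j) =
      ∫⁻ x, F (x, gaussMap (L j) x) ∂bdryMeasure (m + 1) (L j) := by
    filter_upwards [hL.eventually hFeq] with j hj
    exact lintegral_congr_ae ((ae_mem_frontier_bdryMeasure (L j)).mono (hj (h0L j)))
  rw [limsup_congr hcongr,
    lintegral_congr_ae ((ae_mem_frontier_bdryMeasure K).mono (hFeq.self_of_nhds h0))]
  exact limsup_lintegral_bdryMeasure_le h0 hL h0L hF

theorem limsup_lpFunctional_le (hp : 0 < p) (h0 : (K : Set (Euc (m + 1))) ∈ 𝓝 0)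
    (hL : Tendsto L atTop (𝓝 K)) (h0L : ∀ j, (L j : Set (Euc (m + 1))) ∈ 𝓝 0)
    (hG : Continuous G) (hpos : ∀ x, 0 < G x) :
    limsup (fun j => lpFunctional (m + 1) p G (L j)) atTop ≤ lpFunctional (m + 1) p G K :=
  limsup_rpow_mul_rpow_le (tendsto_lintegral_rpow_curv0 hL hG hpos _).limsup_eq.le
    (limsup_lintegral_rpow_mul_suppFn_rpow_le h0 hL h0L hG hpos p (1 - p))
    (lintegral_rpow_curv0_lt_top K hG hpos _).ne
    (lintegral_rpow_mul_suppFn_rpow_lt_top h0 hG hpos p (1 - p)).ne (by positivity) (by positivity)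

end LpFunctional

instance canLift_convexBody {n : ℕ} :
    CanLift (Set (Euc n)) (ConvexBody (Euc n)) (↑) IsConvexBody :=
  ⟨fun K hK => ⟨⟨K, hK.2.1, hK.1, hK.2.2.mono interior_subset⟩, rfl⟩⟩

theorem statement12 (n : ℕ) (hn : 0 < n) (p : ℝ) (hp : 0 < p)
    (K : Set (Euc n)) (hK : IsConvexBody K) (h0 : (0 : Euc n) ∈ interior K)
    (Kseq : ℕ → Set (Euc n)) (hKseq : ∀ j, IsConvexBody (Kseq j))
    (h0seq : ∀ j, (0 : Euc n) ∈ interior (Kseq j))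
    (hconv : Tendsto (fun j => EMetric.hausdorffEdist (Kseq j) K) atTop (𝓝 0)) :
    Filter.limsup (fun j => lpASA n p (Kseq j)) atTop ≤ lpASA n p K := by
  obtain ⟨m, rfl⟩ : ∃ m, n = m + 1 := Nat.exists_eq_add_one.2 hn
  lift K to ConvexBody (Euc (m + 1)) using hK
  lift Kseq to ℕ → ConvexBody (Euc (m + 1)) using hKseq
  have hL : Tendsto Kseq atTop (𝓝 K) :=
    tendsto_iff_edist_tendsto_0.2 (hconv.congr fun j => ConvexBody.hausdorffEDist_coe (Kseq j) K)
  simp only [lpASA_eq_iInf]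
  refine le_iInf fun G => ?_
  calc limsup (fun j => ⨅ G' : {G : C(Euc (m + 1), ℝ) // ∀ x, 0 < G x},
        lpFunctional (m + 1) p G'.1 (Kseq j)) atTop
      ≤ limsup (fun j => lpFunctional (m + 1) p G.1 (Kseq j)) atTop :=
        limsup_le_limsup (Eventually.of_forall fun j => iInf_le _ G)
    _ ≤ lpFunctional (m + 1) p G.1 K :=
        limsup_lpFunctional_le hp (mem_interior_iff_mem_nhds.1 h0) hL
          (fun j => mem_interior_iff_mem_nhds.1 (h0seq j)) G.1.continuous G.2

end
end
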